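/- arXiv:2308.00840 — 10 statements merged into one kernel-verified Lean document; each statement's English description precedes it below -/
import Mathlib

section
/- Let x be an optimal feasible solution of the vertex-cover LP, and set L = {v ∈ V : 0 < x_v < 1/2} and H = {v ∈ V : 1/2 < x_v < 1}. Then w(L) = w(H). -/
/-!
A coordinate of `x` equal to `0` and an edge with `x u + x v = 1` are the tight constraints of the
linear program. If `φ 0 = 0` and `φ (1 - a) = -φ a`, then moving `x` in the direction `φ ∘ x` keeps
every tight constraint tight, so both `x + ε • φ ∘ x` and `x - ε • φ ∘ x` are feasible for small
`ε > 0`, and optimality of `x` forces `w ⬝ᵥ φ ∘ x = 0`. The theorem is the case in which `φ` is `1`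
on `(0, 1/2)`, `-1` on `(1/2, 1)`, and `0` elsewhere.
-/

section

variable {𝕜 : Type*} [Field 𝕜] [LinearOrder 𝕜] [IsStrictOrderedRing 𝕜]

lemma exists_pos_mul_abs_le {s δ : 𝕜} (hs : 0 ≤ s) (hδ : s = 0 → δ = 0) :
    ∃ ε > 0, ε * |δ| ≤ s := by
  rcases hs.eq_or_lt with h | h
  · exact ⟨1, one_pos, by simp [hδ h.symm, hs]⟩
  · obtain ⟨ε, hε, hlt⟩ := exists_pos_mul_lt h |δ|
    exact ⟨ε, hε, (mul_comm ε |δ|).trans_le hlt.le⟩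

lemma exists_pos_forall_mul_abs_le {ι : Type*} [Finite ι] {s δ : ι → 𝕜} (hs : ∀ i, 0 ≤ s i)
    (hδ : ∀ i, s i = 0 → δ i = 0) : ∃ ε > 0, ∀ i, ε * |δ i| ≤ s i := by
  choose b hb hbs using fun i => exists_pos_mul_abs_le (hs i) (hδ i)
  obtain ⟨ε, hε, hεb⟩ := Pi.exists_forall_pos_add_lt hb
  refine ⟨ε, hε, fun i => le_trans ?_ (hbs i)⟩
  have : ε ≤ b i := by simpa using (hεb i).le
  gcongr

end

/-- Feasibility for the vertex-cover linear program of the graph with edge relation `r`, which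
need not be symmetric or irreflexive. -/
structure IsFractionalVertexCover {V 𝕜 : Type*} [Zero 𝕜] [One 𝕜] [Add 𝕜] [LE 𝕜]
    (r : V → V → Prop) (x : V → 𝕜) : Prop where
  nonneg : ∀ v, 0 ≤ x v
  one_le_add : ∀ u v, r u v → 1 ≤ x u + x v

namespace IsFractionalVertexCover

variable {V 𝕜 : Type*} [Field 𝕜] [LinearOrder 𝕜] [IsStrictOrderedRing 𝕜]
  {r : V → V → Prop} {w x d : V → 𝕜}

lemma add_of_abs_le (hd : ∀ v, |d v| ≤ x v)
    (hdr : ∀ u v, r u v → |d u + d v| ≤ x u + x v - 1) :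
    IsFractionalVertexCover r (x + d) where
  nonneg v := by
    rw [Pi.add_apply]
    linarith [neg_le_of_abs_le (hd v)]
  one_le_add u v huv := by
    rw [Pi.add_apply, Pi.add_apply]
    linarith [neg_le_of_abs_le (hdr u v huv)]

lemma exists_pos_add_smul_and_sub_smul [Finite V] (hx : IsFractionalVertexCover r x)
    (hd : ∀ v, x v = 0 → d v = 0) (hdr : ∀ u v, r u v → x u + x v = 1 → d u + d v = 0) :
    ∃ ε : 𝕜, 0 < ε ∧
      IsFractionalVertexCover r (x + ε • d) ∧ IsFractionalVertexCover r (x - ε • d) := by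
  obtain ⟨a, ha, hax⟩ := exists_pos_forall_mul_abs_le hx.nonneg hd
  obtain ⟨b, hb, hbx⟩ := exists_pos_forall_mul_abs_le
    (ι := {e : V × V // r e.1 e.2}) (s := fun e => x e.1.1 + x e.1.2 - 1)
    (δ := fun e => d e.1.1 + d e.1.2)
    (fun e => sub_nonneg.2 (hx.one_le_add _ _ e.2))
    (fun e he => hdr _ _ e.2 (sub_eq_zero.1 he))
  have hε : 0 < min a b := lt_min ha hb
  have hvertex (v : V) : |(min a b • d) v| ≤ x v := by
    rw [Pi.smul_apply, smul_eq_mul, abs_mul, abs_of_pos hε]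
    exact (mul_le_mul_of_nonneg_right (min_le_left a b) (abs_nonneg _)).trans (hax v)
  have hedge (u v : V) (huv : r u v) :
      |(min a b • d) u + (min a b • d) v| ≤ x u + x v - 1 := by
    rw [Pi.smul_apply, Pi.smul_apply, ← smul_add, smul_eq_mul, abs_mul, abs_of_pos hε]
    exact (mul_le_mul_of_nonneg_right (min_le_right a b) (abs_nonneg _)).trans
      (hbx ⟨(u, v), huv⟩)
  refine ⟨min a b, hε, add_of_abs_le hvertex hedge, ?_⟩
  rw [sub_eq_add_neg]
  refine add_of_abs_le (fun v => ?_) (fun u v huv => ?_)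
  · simpa only [Pi.neg_apply, abs_neg] using hvertex v
  · simpa only [Pi.neg_apply, ← neg_add, abs_neg] using hedge u v huv

variable [Fintype V]

lemma dotProduct_eq_zero_of_isMinOn (hx : IsFractionalVertexCover r x)
    (hmin : IsMinOn (w ⬝ᵥ ·) {y | IsFractionalVertexCover r y} x)
    (hd : ∀ v, x v = 0 → d v = 0) (hdr : ∀ u v, r u v → x u + x v = 1 → d u + d v = 0) :
    w ⬝ᵥ d = 0 := by
  obtain ⟨ε, hε, hadd, hsub⟩ := hx.exists_pos_add_smul_and_sub_smul hd hdr
  have hle_add : w ⬝ᵥ x ≤ w ⬝ᵥ (x + ε • d) := hmin hadd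
  have hle_sub : w ⬝ᵥ x ≤ w ⬝ᵥ (x - ε • d) := hmin hsub
  rw [dotProduct_add, dotProduct_smul, smul_eq_mul] at hle_add
  rw [dotProduct_sub, dotProduct_smul, smul_eq_mul] at hle_sub
  have hzero : ε * (w ⬝ᵥ d) = 0 := by linarith
  exact (mul_eq_zero.1 hzero).resolve_left hε.ne'

lemma dotProduct_comp_eq_zero_of_isMinOn (hx : IsFractionalVertexCover r x)
    (hmin : IsMinOn (w ⬝ᵥ ·) {y | IsFractionalVertexCover r y} x)
    {φ : 𝕜 → 𝕜} (hφ₀ : φ 0 = 0) (hφ : ∀ a, φ (1 - a) = -φ a) : w ⬝ᵥ (φ ∘ x) = 0 := by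
  refine hx.dotProduct_eq_zero_of_isMinOn hmin (fun v hv => ?_) (fun u v _ huv => ?_)
  · rw [Function.comp_apply, hv, hφ₀]
  · rw [Function.comp_apply, Function.comp_apply, eq_sub_of_add_eq huv, hφ, neg_add_cancel]

end IsFractionalVertexCover

theorem weight_L_eq_weight_H_of_optimal_general {V 𝕜 : Type*} [Fintype V]
    [Field 𝕜] [LinearOrder 𝕜] [IsStrictOrderedRing 𝕜] {r : V → V → Prop} {w x : V → 𝕜}
    (hx : IsFractionalVertexCover r x)
    (hmin : IsMinOn (w ⬝ᵥ ·) {y | IsFractionalVertexCover r y} x)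
    {S : Set 𝕜} (hS : 0 ∈ S ↔ 1 ∈ S) {L H : Finset V}
    (hL : ∀ v, v ∈ L ↔ x v ∈ S) (hH : ∀ v, v ∈ H ↔ 1 - x v ∈ S) :
    ∑ v ∈ L, w v = ∑ v ∈ H, w v := by
  classical
  let φ : 𝕜 → 𝕜 := fun a => (if a ∈ S then 1 else 0) - (if 1 - a ∈ S then 1 else 0)
  have hφ₀ : φ 0 = 0 := by simp only [φ, hS, sub_zero, sub_self]
  have hφ (a : 𝕜) : φ (1 - a) = -φ a := by simp only [φ, sub_sub_cancel, neg_sub]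
  have hsum : w ⬝ᵥ (φ ∘ x) = ∑ v ∈ L, w v - ∑ v ∈ H, w v := by
    simp [dotProduct, φ, ← hL, ← hH, mul_sub, Finset.sum_sub_distrib]
  rw [← sub_eq_zero, ← hsum]
  exact hx.dotProduct_comp_eq_zero_of_isMinOn hmin hφ₀ hφ

/-- For an optimal feasible solution `x` of the vertex-cover LP, with
`L = {v : 0 < x v < 1/2}` and `H = {v : 1/2 < x v < 1}`, one has `w(L) = w(H)`. -/
theorem weight_L_eq_weight_H_of_optimal {V : Type*} [Fintype V]
    (G : SimpleGraph V) (w : V → ℝ) (hw : ∀ v, 0 < w v)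
    (x : V → ℝ)
    (hx0 : ∀ v, 0 ≤ x v)
    (hxE : ∀ u v, G.Adj u v → 1 ≤ x u + x v)
    (hopt : ∀ y : V → ℝ, (∀ v, 0 ≤ y v) → (∀ u v, G.Adj u v → 1 ≤ y u + y v) →
      ∑ v, w v * x v ≤ ∑ v, w v * y v)
    (L H : Finset V)
    (hL : ∀ v, v ∈ L ↔ 0 < x v ∧ x v < 1/2)
    (hH : ∀ v, v ∈ H ↔ 1/2 < x v ∧ x v < 1) :
    ∑ v ∈ L, w v = ∑ v ∈ H, w v := by
  have hH' : ∀ v, v ∈ H ↔ 1 - x v ∈ Set.Ioo 0 (1 / 2) := by grind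
  exact weight_L_eq_weight_H_of_optimal_general ⟨hx0, hxE⟩
    (fun y hy => hopt y hy.nonneg hy.one_le_add) (by norm_num) hL hH'
end

section
/- Let x be a feasible solution of the vertex-cover LP with x_v ≤ 1 for all v, let L = {v ∈ V : 0 < x_v < 1/2} and H = {v ∈ V : 1/2 < x_v < 1}, and suppose L ∪ H is nonempty. Let ε = min_{v ∈ L ∪ H} |x_v − 1/2|. Then the assignment y given by y_v = x_v − ε for v ∈ H, y_v = x_v + ε for v ∈ L, and y_v = x_v otherwise, is feasible for the vertex-cover LP, and val(y) = val(x) + ε(w(L) − w(H)). -/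
/-!
The edge constraint `1 ≤ s + t` can only be endangered at an endpoint whose value drops. Suppose
`s < 1/2`, so that `t > 1/2`. If `t < 1`, then `s > 0`, and the loss of `ε` at `t` is exactly
compensated by the gain of `ε` at `s`; if `t ≥ 1`, neither value drops. If instead both values are
at least `1/2`, they stay so, because `ε` is at most the distance from `1/2` of every value that is
lowered.
-/

section

variable {V K : Type*} [Field K] [LinearOrder K]

/-- Feasibility of the assignment `x` for the vertex-cover LP of `G`. As in the LP, `x v` may
exceed `1`. -/
structure IsVertexCoverLPFeasible (G : SimpleGraph V) (x : V → K) : Prop where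
  nonneg (v : V) : 0 ≤ x v
  one_le_add {u v : V} (huv : G.Adj u v) : 1 ≤ x u + x v

/-- The value given by the shifted assignment to a vertex of value `t`: values strictly between
`1/2` and `1` are lowered by `ε`, values strictly between `0` and `1/2` are raised by `ε`. -/
def shiftTowardHalf (ε t : K) : K :=
  if 1 / 2 < t ∧ t < 1 then t - ε else if 0 < t ∧ t < 1 / 2 then t + ε else t

theorem sum_mul_shiftTowardHalf (s : Finset V) (w x : V → K) (ε : K) :
    ∑ v ∈ s, w v * shiftTowardHalf ε (x v) = ∑ v ∈ s, w v * x v +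
      ε * (∑ v ∈ s with 0 < x v ∧ x v < 1 / 2, w v - ∑ v ∈ s with 1 / 2 < x v ∧ x v < 1, w v) := by
  have mul_shift (v : V) : w v * shiftTowardHalf ε (x v) = w v * x v +
      ε * ((if 0 < x v ∧ x v < 1 / 2 then w v else 0) -
        if 1 / 2 < x v ∧ x v < 1 then w v else 0) := by
    have disjoint : 1 / 2 < x v ∧ x v < 1 → ¬(0 < x v ∧ x v < 1 / 2) :=
      fun high low => lt_asymm high.1 low.2
    unfold shiftTowardHalf
    split_ifs with high low
    · exact absurd low (disjoint high)
    all_goals ring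
  simp_rw [mul_shift, Finset.sum_add_distrib, ← Finset.mul_sum, Finset.sum_sub_distrib,
    Finset.sum_filter]

variable [IsStrictOrderedRing K] {ε s t : K}

theorem le_shiftTowardHalf (hε : 0 ≤ ε) (ht : ¬(1 / 2 < t ∧ t < 1)) :
    t ≤ shiftTowardHalf ε t := by
  rw [shiftTowardHalf, if_neg ht]
  split_ifs <;> linarith

theorem half_le_shiftTowardHalf (hε : 1 / 2 < t → t < 1 → ε ≤ t - 1 / 2) (ht : 1 / 2 ≤ t) :
    1 / 2 ≤ shiftTowardHalf ε t := by
  unfold shiftTowardHalf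
  split_ifs with high low
  · linarith [hε high.1 high.2]
  · exact absurd low.2 ht.not_gt
  · exact ht

theorem one_le_shiftTowardHalf_add_of_lt_half (hε : 0 ≤ ε) (hs : s < 1 / 2) (hst : 1 ≤ s + t) :
    1 ≤ shiftTowardHalf ε s + shiftTowardHalf ε t := by
  have s_not_high : ¬(1 / 2 < s ∧ s < 1) := fun high => lt_asymm high.1 hs
  obtain ht | ht := lt_or_ge t 1
  · have s_low : 0 < s ∧ s < 1 / 2 := ⟨by linarith, hs⟩
    have t_high : 1 / 2 < t ∧ t < 1 := ⟨by linarith, ht⟩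
    calc
      1 ≤ (s + ε) + (t - ε) := by linarith
      _ = shiftTowardHalf ε s + shiftTowardHalf ε t := by
        simp only [shiftTowardHalf, if_neg s_not_high, if_pos s_low, if_pos t_high]
  · have t_not_high : ¬(1 / 2 < t ∧ t < 1) := fun high => ht.not_gt high.2
    exact hst.trans (add_le_add (le_shiftTowardHalf hε s_not_high)
      (le_shiftTowardHalf hε t_not_high))

variable {G : SimpleGraph V} {x : V → K}

theorem IsVertexCoverLPFeasible.comp_shiftTowardHalf (hx : IsVertexCoverLPFeasible G x)
    (hε : 0 ≤ ε) (hεx : ∀ v, 1 / 2 < x v → x v < 1 → ε ≤ x v - 1 / 2) :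
    IsVertexCoverLPFeasible G fun v => shiftTowardHalf ε (x v) where
  nonneg v := by
    obtain hv | hv := lt_or_ge (x v) (1 / 2)
    · exact (hx.nonneg v).trans (le_shiftTowardHalf hε fun high => lt_asymm high.1 hv)
    · exact one_half_pos.le.trans (half_le_shiftTowardHalf (hεx v) hv)
  one_le_add {u v} huv := by
    have hadd : 1 ≤ x u + x v := hx.one_le_add huv
    obtain hu | hu := lt_or_ge (x u) (1 / 2)
    · exact one_le_shiftTowardHalf_add_of_lt_half hε hu hadd
    obtain hv | hv := lt_or_ge (x v) (1 / 2)
    · rw [add_comm] at hadd ⊢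
      exact one_le_shiftTowardHalf_add_of_lt_half hε hv hadd
    · exact (add_halves (1 : K)).ge.trans
        (add_le_add (half_le_shiftTowardHalf (hεx u) hu) (half_le_shiftTowardHalf (hεx v) hv))

theorem shifted_assignment_feasible_general (hx : IsVertexCoverLPFeasible G x) (hε : 0 ≤ ε)
    (hεx : ∀ v, 1 / 2 < x v → x v < 1 → ε ≤ x v - 1 / 2) :
    (IsVertexCoverLPFeasible G fun v => shiftTowardHalf ε (x v)) ∧
    ∀ (s : Finset V) (w : V → K),
      ∑ v ∈ s, w v * shiftTowardHalf ε (x v) = ∑ v ∈ s, w v * x v +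
        ε * (∑ v ∈ s with 0 < x v ∧ x v < 1 / 2, w v -
          ∑ v ∈ s with 1 / 2 < x v ∧ x v < 1, w v) :=
  ⟨hx.comp_shiftTowardHalf hε hεx, fun s w => sum_mul_shiftTowardHalf s w x ε⟩

end

/-- Given a feasible LP solution `x` with `x v ≤ 1`, sets
`L = {v : 0 < x v < 1/2}` and `H = {v : 1/2 < x v < 1}` with `L ∪ H` nonempty, and
`ε = min_{v ∈ L ∪ H} |x v - 1/2|`, the shifted assignment `y` (subtracting `ε` on `H`,
adding `ε` on `L`) is feasible, and `val(y) = val(x) + ε (w(L) - w(H))`. -/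
theorem shifted_assignment_feasible {V : Type*} [Fintype V] [DecidableEq V]
    (G : SimpleGraph V) (w : V → ℝ) (hw : ∀ v, 0 < w v)
    (x : V → ℝ)
    (hx0 : ∀ v, 0 ≤ x v)
    (hxE : ∀ u v, G.Adj u v → 1 ≤ x u + x v)
    (hx1 : ∀ v, x v ≤ 1)
    (L H : Finset V)
    (hL : ∀ v, v ∈ L ↔ 0 < x v ∧ x v < 1/2)
    (hH : ∀ v, v ∈ H ↔ 1/2 < x v ∧ x v < 1)
    (hne : (L ∪ H).Nonempty)
    (ε : ℝ) (hε : ε = (L ∪ H).inf' hne fun v => |x v - 1/2|)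
    (y : V → ℝ)
    (hy : ∀ v, y v = if v ∈ H then x v - ε else if v ∈ L then x v + ε else x v) :
    (∀ v, 0 ≤ y v) ∧
    (∀ u v, G.Adj u v → 1 ≤ y u + y v) ∧
    ∑ v, w v * y v = ∑ v, w v * x v + ε * (∑ v ∈ L, w v - ∑ v ∈ H, w v) := by
  have hε0 : 0 ≤ ε := hε ▸ Finset.le_inf' _ _ fun v _ => abs_nonneg _
  have hεx (v : V) (hv : 1 / 2 < x v) (hv1 : x v < 1) : ε ≤ x v - 1 / 2 := by
    rw [hε, ← abs_of_pos (sub_pos.2 hv)]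
    exact Finset.inf'_le _ (Finset.mem_union_right L ((hH v).2 ⟨hv, hv1⟩))
  obtain rfl : y = fun v => shiftTowardHalf ε (x v) :=
    funext fun v => by simp only [hy, hL, hH, shiftTowardHalf]
  obtain rfl : L = ({v | 0 < x v ∧ x v < 1 / 2} : Finset V) := by ext v; simp [hL]
  obtain rfl : H = ({v | 1 / 2 < x v ∧ x v < 1} : Finset V) := by ext v; simp [hH]
  obtain ⟨feasible, val_eq⟩ := shifted_assignment_feasible_general ⟨hx0, hxE _ _⟩ hε0 hεx
  exact ⟨feasible.nonneg, fun _ _ => feasible.one_le_add, val_eq Finset.univ w⟩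
end

section
/- Let S be a vertex cover of the bipartite double cover G_B of G. Define x_v = (χ_S(v_1) + χ_S(v_2))/2 for every v ∈ V, where χ_S is the indicator function of S. Then x is a feasible half-integral solution of the vertex-cover LP of G with value val(x) = w(S)/2. -/
/-- The bipartite double cover of a graph `G`: vertices are `V ⊕ V`, with `Sum.inl u`
adjacent to `Sum.inr v` whenever `u` and `v` are adjacent in `G`. -/
def doubleCover {V : Type*} (G : SimpleGraph V) : SimpleGraph (V ⊕ V) :=
  SimpleGraph.fromRel (fun a b => ∃ u v, G.Adj u v ∧ a = Sum.inl u ∧ b = Sum.inr v)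

/-!
Every edge `uv` of `G` lifts to the two edges `u₁v₂` and `v₁u₂` of the double cover, and averaging
their two constraints gives the constraint of `uv`. Hence averaging over the two copies of each
vertex turns any fractional vertex cover of the double cover into one of `G` of half the value.
The indicator of a vertex cover is a fractional vertex cover with values `0` and `1`, and averages
of two such values are half-integral.
-/

section FractionalVertexCover

variable {V K : Type*}

/-- A fractional vertex cover of `G`: a feasible assignment of the vertex-cover linear program. -/
structure IsFractionalVertexCover_s4 [Semiring K] [LE K] (G : SimpleGraph V) (x : V → K) : Prop where
  nonneg (v : V) : 0 ≤ x v
  one_le_add (u v : V) : G.Adj u v → 1 ≤ x u + x v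

/-- A half-integral assignment: one with values in `{0, 1/2, 1}`. -/
def IsHalfIntegral [DivisionRing K] (x : V → K) : Prop :=
  ∀ v, x v = 0 ∨ x v = 1 / 2 ∨ x v = 1

/-- The assignment on `V` induced by an assignment on the double cover: the value at `v` is the
average of the values at the two copies `Sum.inl v` and `Sum.inr v`. -/
def fiberAverage [DivisionRing K] (y : V ⊕ V → K) (v : V) : K :=
  (y (Sum.inl v) + y (Sum.inr v)) / 2

theorem isFractionalVertexCover_indicator_one [Semiring K] [PartialOrder K] [IsOrderedRing K]
    {G : SimpleGraph V} {S : Set V} (hS : G.IsVertexCover S) :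
    IsFractionalVertexCover_s4 G (S.indicator (1 : V → K)) where
  nonneg := Set.indicator_nonneg fun _ _ ↦ zero_le_one
  one_le_add u v huv := by
    have nonneg (a : V) : 0 ≤ S.indicator (1 : V → K) a :=
      Set.indicator_nonneg (fun _ _ ↦ zero_le_one) a
    rcases hS huv with hu | hv
    · rw [Set.indicator_of_mem hu]
      exact le_add_of_nonneg_right (nonneg v)
    · rw [Set.indicator_of_mem hv]
      exact le_add_of_nonneg_left (nonneg u)

theorem doubleCover_adj_inl_inr {G : SimpleGraph V} {u v : V} :
    (doubleCover G).Adj (Sum.inl u) (Sum.inr v) ↔ G.Adj u v := by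
  simp [doubleCover]

theorem isFractionalVertexCover_fiberAverage [Field K] [LinearOrder K] [IsStrictOrderedRing K]
    {G : SimpleGraph V} {y : V ⊕ V → K} (hy : IsFractionalVertexCover_s4 (doubleCover G) y) :
    IsFractionalVertexCover_s4 G (fiberAverage y) where
  nonneg v := div_nonneg (add_nonneg (hy.nonneg _) (hy.nonneg _)) zero_le_two
  one_le_add u v huv := by
    have cover_uv := hy.one_le_add _ _ (doubleCover_adj_inl_inr.mpr huv)
    have cover_vu := hy.one_le_add _ _ (doubleCover_adj_inl_inr.mpr huv.symm)
    unfold fiberAverage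
    linarith

theorem isHalfIntegral_fiberAverage_indicator_one [DivisionRing K] [NeZero (2 : K)]
    (S : Set (V ⊕ V)) :
    IsHalfIntegral (fiberAverage (S.indicator (1 : V ⊕ V → K))) := by
  intro v
  by_cases hl : Sum.inl v ∈ S <;> by_cases hr : Sum.inr v ∈ S <;>
    simp [fiberAverage, hl, hr, one_add_one_eq_two, two_ne_zero]

end FractionalVertexCover

section Value

variable {α β V M K : Type*}

theorem finsum_sum_type [AddCommMonoid M] {f : α ⊕ β → M} (hf : f.HasFiniteSupport) :
    ∑ᶠ a, f a = ∑ᶠ a, f (Sum.inl a) + ∑ᶠ b, f (Sum.inr b) := by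
  rw [← finsum_mem_range Sum.inl_injective, ← finsum_mem_range Sum.inr_injective,
    ← finsum_mem_union' Set.isCompl_range_inl_range_inr.disjoint (hf.inter_of_right _)
      (hf.inter_of_right _),
    Set.range_inl_union_range_inr, finsum_mem_univ]

theorem finsum_mul_fiberAverage [DivisionRing K] (w : V → K) {y : V ⊕ V → K}
    (hy : y.HasFiniteSupport) :
    ∑ᶠ v, w v * fiberAverage y v = (∑ᶠ a, Sum.elim w w a * y a) / 2 := by
  have hwy : (Sum.elim w w * y).HasFiniteSupport := hy.mul_right _
  calc ∑ᶠ v, w v * fiberAverage y v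
      = ∑ᶠ v, (w v * y (Sum.inl v) + w v * y (Sum.inr v)) / 2 := by
        simp only [fiberAverage, ← mul_div_assoc, mul_add]
    _ = (∑ᶠ v, (w v * y (Sum.inl v) + w v * y (Sum.inr v))) / 2 := by
        simp only [div_eq_mul_inv, finsum_mul]
    _ = (∑ᶠ v, w v * y (Sum.inl v) + ∑ᶠ v, w v * y (Sum.inr v)) / 2 := by
        congr 1
        exact finsum_add_distrib (hwy.comp_of_injective Sum.inl_injective)
          (hwy.comp_of_injective Sum.inr_injective)
    _ = (∑ᶠ a, Sum.elim w w a * y a) / 2 := congrArg (· / 2) (finsum_sum_type hwy).symm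

theorem finsum_mul_indicator_one [NonAssocSemiring K] (w : α → K) (S : Finset α) :
    ∑ᶠ a, w a * (S : Set α).indicator 1 a = ∑ a ∈ S, w a := by
  rw [← finsum_mem_coe_finset, finsum_mem_def]
  simp only [← Set.indicator_mul_right, Pi.one_apply, mul_one]

end Value

theorem doubleCover_vc_gives_halfIntegral_LP_general {V K : Type*} [Field K] [LinearOrder K]
    [IsStrictOrderedRing K] (G : SimpleGraph V) (w : V → K) (S : Finset (V ⊕ V))
    (hS : (doubleCover G).IsVertexCover S) :
    let x : V → K := fiberAverage ((S : Set (V ⊕ V)).indicator 1)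
    IsFractionalVertexCover_s4 G x ∧ IsHalfIntegral x ∧
      ∑ᶠ v, w v * x v = (∑ a ∈ S, Sum.elim w w a) / 2 := by
  refine ⟨isFractionalVertexCover_fiberAverage (isFractionalVertexCover_indicator_one hS),
    isHalfIntegral_fiberAverage_indicator_one _, ?_⟩
  rw [finsum_mul_fiberAverage w (S.finite_toSet.subset Set.support_indicator_subset),
    finsum_mul_indicator_one]

/-- If `S` is a vertex cover of the bipartite double cover of `G`, then
`x v = (χ_S(v₁) + χ_S(v₂))/2` is a feasible half-integral solution of the vertex-cover
LP of `G` with value `w(S)/2`. -/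
theorem doubleCover_vc_gives_halfIntegral_LP {V : Type*} [Fintype V] [DecidableEq V]
    (G : SimpleGraph V) (w : V → ℝ) (hw : ∀ v, 0 < w v)
    (S : Finset (V ⊕ V))
    (hS : ∀ a b, (doubleCover G).Adj a b → a ∈ S ∨ b ∈ S)
    (x : V → ℝ)
    (hx : ∀ v, x v = ((if Sum.inl v ∈ S then (1:ℝ) else 0) +
      (if Sum.inr v ∈ S then (1:ℝ) else 0)) / 2) :
    (∀ v, 0 ≤ x v) ∧
    (∀ u v, G.Adj u v → 1 ≤ x u + x v) ∧
    (∀ v, x v = 0 ∨ x v = 1/2 ∨ x v = 1) ∧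
    ∑ v, w v * x v = (∑ a ∈ S, Sum.elim w w a) / 2 := by
  obtain rfl : x = fiberAverage ((S : Set (V ⊕ V)).indicator 1) :=
    funext fun v ↦ by simp [hx, fiberAverage, Set.indicator_apply]
  obtain ⟨⟨nonneg, cover⟩, half, value⟩ := doubleCover_vc_gives_halfIntegral_LP_general G w S hS
  exact ⟨nonneg, cover, half, (finsum_eq_sum_of_fintype _).symm.trans value⟩
end

section
/- (Weighted Nemhauser–Trotter theorem) Let x be an optimal half-integral solution of the vertex-cover LP of G, with V_0 = {v : x_v = 0}, V_{1/2} = {v : x_v = 1/2}, V_1 = {v : x_v = 1}. Then there exists a minimum-weight vertex cover S of G such that V_1 ⊆ S ⊆ V_1 ∪ V_{1/2}. -/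
/-!
Given a minimum-weight vertex cover `C`, let `S` consist of the vertices with `1/2 < x v` and of
those `v ∈ C` with `x v = 1/2`. The constraints on `x` make `S` a vertex cover. For small `ε > 0`
the perturbation `x + ε (1_C - 1_S)` is still feasible: an edge can lose `ε` only at an endpoint
`u ∈ S \ C`, its other endpoint `v` then lies in `C`, and either `v ∉ S` gains `ε` back or
`1/2 ≤ x v` while `x u` exceeds `1/2` by at least `ε`. Optimality of `x` thus gives `w(S) ≤ w(C)`.
-/

open Finset

section VertexCover

variable {V : Type*}

/-- Feasible assignments of the vertex-cover LP of `G`. -/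
structure IsFractionalVertexCover_s8 {R : Type*} [AddMonoidWithOne R] [LE R]
    (G : SimpleGraph V) (x : V → R) : Prop where
  nonneg : ∀ v, 0 ≤ x v
  one_le_add : ∀ ⦃u v⦄, G.Adj u v → 1 ≤ x u + x v

/-- Vertex covers of minimum total weight, encoded as finsets so that their weight is a finite
sum. -/
structure IsMinWeightVertexCover {M : Type*} [AddCommMonoid M] [LE M] (G : SimpleGraph V)
    (w : V → M) (S : Finset V) : Prop where
  isVertexCover : G.IsVertexCover S
  sum_le_sum : ∀ ⦃C : Finset V⦄, G.IsVertexCover C → ∑ v ∈ S, w v ≤ ∑ v ∈ C, w v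

theorem exists_isMinWeightVertexCover {M : Type*} [AddCommMonoid M] [LinearOrder M] [Finite V]
    (G : SimpleGraph V) (w : V → M) : ∃ C, IsMinWeightVertexCover G w C := by
  cases nonempty_fintype V
  obtain ⟨C, hC, hmin⟩ := Set.exists_min_image {C : Finset V | G.IsVertexCover C}
    (fun C => ∑ v ∈ C, w v) (Set.toFinite _) ⟨univ, by simp⟩
  exact ⟨C, hC, hmin⟩

theorem dotProduct_indicator_one {R : Type*} [NonAssocSemiring R] [Fintype V] (w : V → R)
    (C : Finset V) : w ⬝ᵥ (C : Set V).indicator 1 = ∑ v ∈ C, w v := by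
  classical
  simp [dotProduct, Set.indicator_apply]

theorem dotProduct_add_smul_indicator_sub {R : Type*} [CommRing R] [Fintype V] (w x : V → R)
    (ε : R) (C S : Finset V) :
    w ⬝ᵥ (x + ε • ((C : Set V).indicator 1 - (S : Set V).indicator 1)) =
      w ⬝ᵥ x + ε * (∑ v ∈ C, w v - ∑ v ∈ S, w v) := by
  rw [dotProduct_add, dotProduct_smul, dotProduct_sub, dotProduct_indicator_one,
    dotProduct_indicator_one, smul_eq_mul]

theorem exists_pos_forall_lt_imp_add_le {ι A : Type*} [Finite ι] [AddCommGroup A] [LinearOrder A]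
    [IsOrderedAddMonoid A] [Nontrivial A] [DenselyOrdered A] (f : ι → A) (a : A) :
    ∃ ε > 0, ∀ i, a < f i → a + ε ≤ f i := by
  cases nonempty_fintype ι
  obtain ⟨b, hab, hbf⟩ := Order.exists_between_finsets {a} {c ∈ univ.image f | a < c} (by simp)
  refine ⟨b - a, sub_pos.2 (hab a (mem_singleton_self a)), fun i hi => ?_⟩
  rw [add_sub_cancel]
  exact (hbf (f i) (by simpa using hi)).le

section HalfRounding

variable {K : Type*} [Field K] [LinearOrder K] [Fintype V] [DecidableEq V]
variable {G : SimpleGraph V} {x : V → K} {C : Finset V} {ε : K} {u v : V}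

/-- The vertex cover obtained by rounding a fractional vertex cover `x` at the threshold `1/2`, with
ties decided by a given vertex cover `C`. -/
def halfRounding (x : V → K) (C : Finset V) : Finset V :=
  {v | 1 / 2 < x v ∨ x v = 1 / 2 ∧ v ∈ C}

theorem mem_halfRounding : v ∈ halfRounding x C ↔ 1 / 2 < x v ∨ x v = 1 / 2 ∧ v ∈ C :=
  mem_filter_univ v

theorem half_le_of_mem_halfRounding (hv : v ∈ halfRounding x C) : 1 / 2 ≤ x v :=
  (mem_halfRounding.1 hv).elim le_of_lt fun h => h.1.ge

/-- The assignment `x + ε (1_C - 1_S)`, where `S` is the half-rounding of `x` along `C`; for small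
`ε` it is a feasible competitor of `x`. -/
noncomputable def roundingPerturbation (x : V → K) (C : Finset V) (ε : K) : V → K :=
  x + ε • ((C : Set V).indicator 1 - (halfRounding x C : Set V).indicator 1)

theorem roundingPerturbation_apply : roundingPerturbation x C ε v =
    x v + ε * ((if v ∈ C then 1 else 0) - if v ∈ halfRounding x C then 1 else 0) := by
  simp [roundingPerturbation, Set.indicator_apply]

theorem roundingPerturbation_of_lt_half (hv : x v < 1 / 2) (hvC : v ∈ C) :
    roundingPerturbation x C ε v = x v + ε := by
  have hvS : v ∉ halfRounding x C := fun h => hv.not_ge (half_le_of_mem_halfRounding h)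
  simp [roundingPerturbation_apply, hvC, hvS]

theorem roundingPerturbation_of_half_lt (hv : 1 / 2 < x v) (hvC : v ∉ C) :
    roundingPerturbation x C ε v = x v - ε := by
  have hvS : v ∈ halfRounding x C := mem_halfRounding.2 (.inl hv)
  simp [roundingPerturbation_apply, hvC, hvS, sub_eq_add_neg]

variable [IsStrictOrderedRing K]

theorem le_roundingPerturbation (hε : 0 ≤ ε) (hv : 1 / 2 < x v → v ∈ C) :
    x v ≤ roundingPerturbation x C ε v := by
  have hvC : v ∈ halfRounding x C → v ∈ C := fun h => (mem_halfRounding.1 h).elim hv And.right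
  rw [roundingPerturbation_apply, le_add_iff_nonneg_right]
  refine mul_nonneg hε (sub_nonneg.2 ?_)
  split_ifs <;> simp_all

theorem IsFractionalVertexCover_s8.isVertexCover_halfRounding (hx : IsFractionalVertexCover_s8 G x)
    (hC : G.IsVertexCover C) : G.IsVertexCover (halfRounding x C) := by
  intro u v huv
  simp only [mem_coe, mem_halfRounding]
  by_cases hu : 1 / 2 < x u
  · exact .inl (.inl hu)
  by_cases hv : 1 / 2 < x v
  · exact .inr (.inl hv)
  have hsum := hx.one_le_add huv
  have hu_eq : x u = 1 / 2 := by linarith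
  have hv_eq : x v = 1 / 2 := by linarith
  exact (hC huv).imp (fun h => .inr ⟨hu_eq, h⟩) (fun h => .inr ⟨hv_eq, h⟩)

theorem IsFractionalVertexCover_s8.one_le_roundingPerturbation_add (hx : IsFractionalVertexCover_s8 G x)
    (hC : G.IsVertexCover C) (hε : 0 < ε) (huv : G.Adj u v) (hu : 1 / 2 + ε ≤ x u) (huC : u ∉ C) :
    1 ≤ roundingPerturbation x C ε u + roundingPerturbation x C ε v := by
  have hvC : v ∈ C := (hC huv).resolve_left huC
  have hu_eq : roundingPerturbation x C ε u = x u - ε :=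
    roundingPerturbation_of_half_lt ((lt_add_of_pos_right _ hε).trans_le hu) huC
  rcases lt_or_ge (x v) (1 / 2) with hv | hv
  · have hv_eq : roundingPerturbation x C ε v = x v + ε := roundingPerturbation_of_lt_half hv hvC
    linarith [hx.one_le_add huv]
  · have hv_ge : x v ≤ roundingPerturbation x C ε v := le_roundingPerturbation hε.le fun _ => hvC
    linarith

theorem IsFractionalVertexCover_s8.roundingPerturbation (hx : IsFractionalVertexCover_s8 G x)
    (hC : G.IsVertexCover C) (hε : 0 < ε) (hgap : ∀ v, 1 / 2 < x v → 1 / 2 + ε ≤ x v) :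
    IsFractionalVertexCover_s8 G (roundingPerturbation x C ε) where
  nonneg v := by
    by_cases hv : 1 / 2 < x v → v ∈ C
    · exact (hx.nonneg v).trans (le_roundingPerturbation hε.le hv)
    · obtain ⟨hv, hvC⟩ := Classical.not_imp.1 hv
      rw [roundingPerturbation_of_half_lt hv hvC]
      linarith [hgap v hv]
  one_le_add u v huv := by
    by_cases hu : 1 / 2 < x u → u ∈ C
    · by_cases hv : 1 / 2 < x v → v ∈ C
      · exact (hx.one_le_add huv).trans
          (add_le_add (le_roundingPerturbation hε.le hu) (le_roundingPerturbation hε.le hv))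
      · obtain ⟨hv, hvC⟩ := Classical.not_imp.1 hv
        rw [add_comm]
        exact hx.one_le_roundingPerturbation_add hC hε huv.symm (hgap v hv) hvC
    · obtain ⟨hu, huC⟩ := Classical.not_imp.1 hu
      exact hx.one_le_roundingPerturbation_add hC hε huv (hgap u hu) huC

theorem IsFractionalVertexCover_s8.sum_halfRounding_le (hx : IsFractionalVertexCover_s8 G x) {w : V → K}
    (hopt : IsMinOn (w ⬝ᵥ ·) {y | IsFractionalVertexCover_s8 G y} x)
    (hC : G.IsVertexCover C) : ∑ v ∈ halfRounding x C, w v ≤ ∑ v ∈ C, w v := by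
  obtain ⟨ε, hε, hgap⟩ := exists_pos_forall_lt_imp_add_le x (1 / 2)
  have hle : w ⬝ᵥ x ≤ w ⬝ᵥ x + ε * (∑ v ∈ C, w v - ∑ v ∈ halfRounding x C, w v) := by
    rw [← dotProduct_add_smul_indicator_sub]
    exact isMinOn_iff.1 hopt _ (hx.roundingPerturbation hC hε hgap)
  exact sub_nonneg.1 (nonneg_of_mul_nonneg_right ((le_add_iff_nonneg_right _).1 hle) hε)

end HalfRounding

theorem nemhauser_trotter_general {K : Type*} [Field K] [LinearOrder K] [IsStrictOrderedRing K]
    [Fintype V] {G : SimpleGraph V} {w x : V → K} (hx : IsFractionalVertexCover_s8 G x)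
    (hopt : IsMinOn (w ⬝ᵥ ·) {y | IsFractionalVertexCover_s8 G y} x) :
    ∃ S : Finset V, IsMinWeightVertexCover G w S ∧
      (∀ v, 1 / 2 < x v → v ∈ S) ∧ ∀ v ∈ S, 1 / 2 ≤ x v := by
  classical
  obtain ⟨C, hC, hmin⟩ := exists_isMinWeightVertexCover G w
  have hS : IsMinWeightVertexCover G w (halfRounding x C) :=
    ⟨hx.isVertexCover_halfRounding hC, fun D hD => (hx.sum_halfRounding_le hopt hC).trans (hmin hD)⟩
  exact ⟨halfRounding x C, hS, fun v hv => mem_halfRounding.2 (.inl hv),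
    fun v => half_le_of_mem_halfRounding⟩

end VertexCover

/-- Weighted Nemhauser–Trotter: For an optimal half-integral LP solution `x`
with level sets `V₀, V_{1/2}, V₁`, there exists a minimum-weight vertex cover `S` of `G`
with `V₁ ⊆ S ⊆ V₁ ∪ V_{1/2}`. -/
theorem nemhauser_trotter {V : Type*} [Fintype V] [DecidableEq V]
    (G : SimpleGraph V) (w : V → ℝ) (hw : ∀ v, 0 < w v)
    (x : V → ℝ)
    (hx0 : ∀ v, 0 ≤ x v)
    (hxE : ∀ u v, G.Adj u v → 1 ≤ x u + x v)
    (hHalf : ∀ v, x v = 0 ∨ x v = 1/2 ∨ x v = 1)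
    (hopt : ∀ y : V → ℝ, (∀ v, 0 ≤ y v) → (∀ u v, G.Adj u v → 1 ≤ y u + y v) →
      ∑ v, w v * x v ≤ ∑ v, w v * y v)
    (V0 V12 V1 : Finset V)
    (hV0 : ∀ v, v ∈ V0 ↔ x v = 0)
    (hV12 : ∀ v, v ∈ V12 ↔ x v = 1/2)
    (hV1 : ∀ v, v ∈ V1 ↔ x v = 1) :
    ∃ S : Finset V,
      (∀ u v, G.Adj u v → u ∈ S ∨ v ∈ S) ∧
      (∀ C : Finset V, (∀ u v, G.Adj u v → u ∈ C ∨ v ∈ C) →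
        ∑ v ∈ S, w v ≤ ∑ v ∈ C, w v) ∧
      V1 ⊆ S ∧ S ⊆ V1 ∪ V12 := by
  obtain ⟨S, hS, hgt, hge⟩ := nemhauser_trotter_general ⟨hx0, hxE⟩
    (isMinOn_iff.2 fun y hy => hopt y hy.nonneg hy.one_le_add)
  refine ⟨S, hS.isVertexCover, fun C hC => hS.sum_le_sum hC, fun v hv => hgt v ?_, fun v hv => ?_⟩
  · norm_num [(hV1 v).1 hv]
  · have hv0 : x v ≠ 0 := by linarith [hge v hv]
    rw [mem_union, hV1, hV12]
    exact ((hHalf v).resolve_left hv0).symm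
end

section
/- Let x be an optimal half-integral solution of the vertex-cover LP of G, with V_0 = {v : x_v = 0} and V_1 = {v : x_v = 1}. Then for every vertex cover S_opt of G, one has w(V_0 ∩ S_opt) ≥ w(V_1 \ S_opt). -/
/-!
Raise `x` by a small `ε > 0` on `V₀ ∩ S` and lower it by `ε` on `V₁ \ S`. An edge that loses weight
at an endpoint in `V₁ \ S` has its other endpoint in `S`: there `x` is either zero and is raised
by `ε`, or is at least `ε`, so the edge had slack `ε`. The shifted assignment is therefore feasible,
and optimality of `x` says that its cost change `ε * (w(V₀ ∩ S) - w(V₁ \ S))` is nonnegative.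
-/

theorem exists_gt_forall_le_of_lt {ι α : Type*} [Finite ι] [LinearOrder α] [NoMaxOrder α]
    (f : ι → α) (a : α) : ∃ b, a < b ∧ ∀ i, a < f i → b ≤ f i := by
  obtain ⟨⟨b, hab⟩, hb⟩ :=
    Set.Finite.bddBelow (Set.finite_range fun i : {i // a < f i} ↦ (⟨f i, i.2⟩ : Set.Ioi a))
  exact ⟨b, hab, fun i hi ↦ hb ⟨⟨i, hi⟩, rfl⟩⟩

section TransferMass

variable {V R : Type*} [DecidableEq V]

/-- The assignment obtained from `x` by adding `ε` on `A` and subtracting `ε` on `B`: the local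
move against which optimality of `x` is tested. On `A ∩ B` the two changes cancel. -/
def transferMass [AddGroup R] (x : V → R) (A B : Finset V) (ε : R) (v : V) : R :=
  x v + (if v ∈ A then ε else 0) - (if v ∈ B then ε else 0)

theorem transferMass_of_mem_of_notMem [AddGroup R] {x : V → R} {A B : Finset V} {ε : R} {v : V}
    (hA : v ∈ A) (hB : v ∉ B) : transferMass x A B ε v = x v + ε := by
  simp [transferMass, hA, hB]

section Order

variable [AddCommGroup R] [PartialOrder R] [IsOrderedAddMonoid R] {x : V → R} {A B : Finset V}
  {ε : R} {v : V}

theorem le_transferMass (hε : 0 ≤ ε) (hB : v ∉ B) : x v ≤ transferMass x A B ε v := by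
  by_cases hA : v ∈ A <;> simp [transferMass, hA, hB, hε]

theorem sub_le_transferMass (hε : 0 ≤ ε) : x v - ε ≤ transferMass x A B ε v := by
  refine sub_le_sub (le_add_of_nonneg_right ?_) ?_ <;> split_ifs <;> simp [hε]

end Order

theorem sum_mul_transferMass [Fintype V] [NonUnitalNonAssocRing R] (w x : V → R)
    (A B : Finset V) (ε : R) :
    ∑ v, w v * transferMass x A B ε v =
      ∑ v, w v * x v + (∑ v ∈ A, w v) * ε - (∑ v ∈ B, w v) * ε := by
  simp only [transferMass, mul_sub, mul_add, mul_ite, mul_zero, Finset.sum_sub_distrib,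
    Finset.sum_add_distrib, Finset.sum_ite_mem, Finset.univ_inter, Finset.sum_mul]

theorem sum_le_sum_of_isMinOn_of_transferMass_mem [Fintype V] [Ring R] [LinearOrder R]
    [IsStrictOrderedRing R] {w x : V → R} {P : Set (V → R)} {A B : Finset V} {ε : R}
    (hmin : IsMinOn (fun y ↦ ∑ v, w v * y v) P x) (hε : 0 < ε) (hmem : transferMass x A B ε ∈ P) :
    ∑ v ∈ B, w v ≤ ∑ v ∈ A, w v := by
  have hle : ∑ v, w v * x v ≤ ∑ v, w v * transferMass x A B ε v := hmin hmem
  rw [sum_mul_transferMass, add_sub_assoc, le_add_iff_nonneg_right, sub_nonneg] at hle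
  exact le_of_mul_le_mul_right hle hε

end TransferMass

/-- Feasibility of `x` for the vertex-cover linear program of `G`. -/
structure IsFractionalVertexCover_s9 {V R : Type*} [AddMonoidWithOne R] [LE R]
    (G : SimpleGraph V) (x : V → R) : Prop where
  nonneg (v : V) : 0 ≤ x v
  one_le_add (u v : V) (huv : G.Adj u v) : 1 ≤ x u + x v

namespace IsFractionalVertexCover_s9

variable {V R : Type*} [DecidableEq V] [Ring R] [PartialOrder R] [IsStrictOrderedRing R]
  {G : SimpleGraph V} {x : V → R} {ε : R}

theorem transferMass_of_forall_adj {A B : Finset V} (hx : IsFractionalVertexCover_s9 G x)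
    (hε : 0 ≤ ε) (hle : ∀ v ∈ B, ε ≤ x v)
    (hadj : ∀ u v, G.Adj u v → u ∈ B → v ∉ B ∧ (v ∈ A ∨ 1 + ε ≤ x u + x v)) :
    IsFractionalVertexCover_s9 G (transferMass x A B ε) where
  nonneg v := by
    by_cases hv : v ∈ B
    · exact (sub_nonneg.2 (hle v hv)).trans (sub_le_transferMass hε)
    · exact (hx.nonneg v).trans (le_transferMass hε hv)
  one_le_add := by
    have of_mem {u v : V} (huv : G.Adj u v) (hu : u ∈ B) :
        1 ≤ transferMass x A B ε u + transferMass x A B ε v := by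
      obtain ⟨hvB, hvA | hslack⟩ := hadj u v huv hu
      · calc
          1 ≤ x u + x v := hx.one_le_add u v huv
          _ = x u - ε + (x v + ε) := by abel
          _ ≤ transferMass x A B ε u + transferMass x A B ε v :=
            add_le_add (sub_le_transferMass hε) (transferMass_of_mem_of_notMem hvA hvB).ge
      · calc
          1 ≤ x u + x v - ε := le_sub_iff_add_le.2 hslack
          _ = x u - ε + x v := by abel
          _ ≤ transferMass x A B ε u + transferMass x A B ε v :=
            add_le_add (sub_le_transferMass hε) (le_transferMass hε hvB)
    intro u v huv
    by_cases hu : u ∈ B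
    · exact of_mem huv hu
    by_cases hv : v ∈ B
    · exact (of_mem huv.symm hv).trans_eq (add_comm _ _)
    · exact (hx.one_le_add u v huv).trans
        (add_le_add (le_transferMass hε hu) (le_transferMass hε hv))

theorem transferMass_inter_sdiff {V₀ V₁ S : Finset V} (hx : IsFractionalVertexCover_s9 G x)
    (hV₀ : ∀ v, v ∈ V₀ ↔ x v = 0) (hV₁ : ∀ v, v ∈ V₁ ↔ x v = 1) (hS : G.IsVertexCover S)
    (hε : 0 ≤ ε) (hgap : ∀ v, 0 < x v → ε ≤ x v) :
    IsFractionalVertexCover_s9 G (transferMass x (V₀ ∩ S) (V₁ \ S) ε) := by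
  have eq_one {v : V} (hv : v ∈ V₁ \ S) : x v = 1 := (hV₁ v).1 (Finset.mem_sdiff.1 hv).1
  refine hx.transferMass_of_forall_adj hε (fun v hv ↦ hgap v (eq_one hv ▸ zero_lt_one))
    fun u v huv hu ↦ ?_
  have hvS : v ∈ S := (hS huv).resolve_left (Finset.mem_sdiff.1 hu).2
  refine ⟨fun hv ↦ (Finset.mem_sdiff.1 hv).2 hvS, ?_⟩
  rcases (hx.nonneg v).eq_or_lt with hzero | hpos
  · exact .inl (Finset.mem_inter.2 ⟨(hV₀ v).2 hzero.symm, hvS⟩)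
  · exact .inr (eq_one hu ▸ add_le_add_right (hgap v hpos) 1)

end IsFractionalVertexCover_s9

theorem weight_V0_inter_ge_weight_V1_sdiff_general {V R : Type*} [Fintype V] [DecidableEq V]
    [Ring R] [LinearOrder R] [IsStrictOrderedRing R] {G : SimpleGraph V} {w x : V → R}
    (hx : IsFractionalVertexCover_s9 G x)
    (hopt : IsMinOn (fun y ↦ ∑ v, w v * y v) {y | IsFractionalVertexCover_s9 G y} x)
    {V₀ V₁ S : Finset V} (hV₀ : ∀ v, v ∈ V₀ ↔ x v = 0) (hV₁ : ∀ v, v ∈ V₁ ↔ x v = 1)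
    (hS : G.IsVertexCover S) :
    ∑ v ∈ V₁ \ S, w v ≤ ∑ v ∈ V₀ ∩ S, w v := by
  obtain ⟨ε, hε, hgap⟩ := exists_gt_forall_le_of_lt x 0
  exact sum_le_sum_of_isMinOn_of_transferMass_mem hopt hε
    (hx.transferMass_inter_sdiff hV₀ hV₁ hS hε.le hgap)

/-- For an optimal half-integral LP solution `x` with level sets `V₀, V₁`,
every vertex cover `Sopt` of `G` satisfies `w(V₀ ∩ Sopt) ≥ w(V₁ \ Sopt)`. -/
theorem weight_V0_inter_ge_weight_V1_sdiff {V : Type*} [Fintype V] [DecidableEq V]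
    (G : SimpleGraph V) (w : V → ℝ) (hw : ∀ v, 0 < w v)
    (x : V → ℝ)
    (hx0 : ∀ v, 0 ≤ x v)
    (hxE : ∀ u v, G.Adj u v → 1 ≤ x u + x v)
    (hHalf : ∀ v, x v = 0 ∨ x v = 1/2 ∨ x v = 1)
    (hopt : ∀ y : V → ℝ, (∀ v, 0 ≤ y v) → (∀ u v, G.Adj u v → 1 ≤ y u + y v) →
      ∑ v, w v * x v ≤ ∑ v, w v * y v)
    (V0 V1 : Finset V)
    (hV0 : ∀ v, v ∈ V0 ↔ x v = 0)
    (hV1 : ∀ v, v ∈ V1 ↔ x v = 1)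
    (Sopt : Finset V)
    (hSopt : ∀ u v, G.Adj u v → u ∈ Sopt ∨ v ∈ Sopt) :
    ∑ v ∈ V1 \ Sopt, w v ≤ ∑ v ∈ V0 ∩ Sopt, w v := by
  exact weight_V0_inter_ge_weight_V1_sdiff_general ⟨hx0, hxE⟩
    (fun y hy ↦ hopt y hy.nonneg hy.one_le_add) hV0 hV1 (fun u v huv ↦ hSopt u v huv)
end

section
/- Let x be an optimal half-integral solution of the vertex-cover LP of G, with V_0, V_{1/2}, V_1 the sets of vertices where x equals 0, 1/2, 1 respectively, and let S_opt be a minimum-weight vertex cover of G. Then S = (S_opt \ V_0) ∪ V_1 is also a minimum-weight vertex cover of G, and it satisfies V_1 ⊆ S ⊆ V_1 ∪ V_{1/2}. -/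
/-!
Let `S` be obtained from a vertex cover `C` by deleting the vertices with `x v < 1/2` and adding
those with `1/2 < x v`. Moving an optimal `x` a small distance `ε` in the direction `1_C - 1_S`
keeps it feasible: `x v` decreases only where `1/2 < x v` and `v ∉ C`, and then every neighbour `u`
of `v` lies in `C`, so that either `x u` increases by the same `ε`, or `1/2 ≤ x u` and the edge `uv`
has slack. The value changes by `ε * (w(C) - w(S))`, so optimality of `x` gives `w(S) ≤ w(C)`.
-/

open Finset

theorem exists_pos_forall_lt_add_le {ι A : Type*} [Finite ι] [AddCommGroup A] [LinearOrder A]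
    [IsOrderedAddMonoid A] [Nontrivial A] (x : ι → A) (a : A) :
    ∃ ε > 0, ∀ i, a < x i → a + ε ≤ x i := by
  by_cases! h : Nonempty {i // a < x i}
  · obtain ⟨⟨i, hi⟩, hmin⟩ := Finite.exists_min fun j : {i // a < x i} ↦ x j
    exact ⟨x i - a, sub_pos.2 hi, fun j hj ↦ by simpa using hmin ⟨j, hj⟩⟩
  · obtain ⟨ε, hε⟩ := exists_zero_lt (α := A)
    exact ⟨ε, hε, fun i hi ↦ (h.false ⟨i, hi⟩).elim⟩

section Tilt

variable {R V : Type*} [CommRing R] [DecidableEq V]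

/-- The assignment `x + ε (1_C - 1_D)`, which moves `x` towards `C` and away from `D`. -/
def tilt (x : V → R) (ε : R) (C D : Finset V) (v : V) : R :=
  x v + ε * ((if v ∈ C then 1 else 0) - (if v ∈ D then 1 else 0))

theorem sum_mul_tilt [Fintype V] (w x : V → R) (ε : R) (C D : Finset V) :
    ∑ v, w v * tilt x ε C D v = ∑ v, w v * x v + ε * (∑ v ∈ C, w v - ∑ v ∈ D, w v) := by
  have sum_eq_sum_indicator (T : Finset V) :
      ∑ v ∈ T, w v = ∑ v, w v * (if v ∈ T then 1 else 0) := by simp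
  rw [sum_eq_sum_indicator C, sum_eq_sum_indicator D, ← sum_sub_distrib, mul_sum,
    ← sum_add_distrib]
  exact sum_congr rfl fun v _ ↦ by rw [tilt]; ring

end Tilt

section VertexCover

variable {K V : Type*} [Field K] [LinearOrder K]

/-- Feasibility for the vertex-cover LP of `G`. -/
structure IsFractionalVertexCover_s10 (G : SimpleGraph V) (x : V → K) : Prop where
  nonneg (v : V) : 0 ≤ x v
  one_le_add (u v : V) : G.Adj u v → 1 ≤ x u + x v

/-- Optimality for the vertex-cover LP of `G` with vertex weights `w`. -/
structure IsMinFractionalVertexCover [Fintype V] (G : SimpleGraph V) (w x : V → K) : Prop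
    extends IsFractionalVertexCover_s10 G x where
  sum_le (y : V → K) : IsFractionalVertexCover_s10 G y → ∑ v, w v * x v ≤ ∑ v, w v * y v

/-- A vertex cover of minimum total weight, as a `Finset` so that its weight is a finite sum. -/
structure IsMinWeightVertexCover_s10 (G : SimpleGraph V) (w : V → K) (C : Finset V) : Prop where
  isVertexCover : G.IsVertexCover C
  sum_le (D : Finset V) : G.IsVertexCover D → ∑ v ∈ C, w v ≤ ∑ v ∈ D, w v

variable [Fintype V] [DecidableEq V] {G : SimpleGraph V} {w x : V → K} {ε : K} {C : Finset V}
  {u v : V}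

/-- The set `(C \ {x < 1/2}) ∪ {x > 1/2}`. For half-integral `x` this is the paper's
`(C \ V₀) ∪ V₁`; comparing with `1/2` extends it to arbitrary `x`. -/
def halfShift (x : V → K) (C : Finset V) : Finset V :=
  {v ∈ C | 1 / 2 ≤ x v} ∪ ({v | 1 / 2 < x v} : Finset V)

theorem mem_halfShift : v ∈ halfShift x C ↔ v ∈ C ∧ 1 / 2 ≤ x v ∨ 1 / 2 < x v := by
  simp [halfShift]

theorem tilt_halfShift_of_mem_of_lt (hvC : v ∈ C) (hv : x v < 1 / 2) :
    tilt x ε C (halfShift x C) v = x v + ε := by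
  have hvS : v ∉ halfShift x C := by simp [mem_halfShift, -one_div, hv, hv.le]
  simp [tilt, hvS, hvC]

theorem tilt_halfShift_of_notMem_of_lt (hvC : v ∉ C) (hv : 1 / 2 < x v) :
    tilt x ε C (halfShift x C) v = x v - ε := by
  have hvS : v ∈ halfShift x C := mem_halfShift.2 (.inr hv)
  simp [tilt, hvS, hvC, sub_eq_add_neg]

variable [IsStrictOrderedRing K]

theorem le_tilt_halfShift (hε : 0 ≤ ε) (hv : 1 / 2 < x v → v ∈ C) :
    x v ≤ tilt x ε C (halfShift x C) v := by
  have hSC : v ∈ halfShift x C → v ∈ C := fun h ↦ (mem_halfShift.1 h).elim And.left hv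
  rw [tilt]
  split_ifs <;> simp_all

namespace IsFractionalVertexCover_s10

theorem isVertexCover_halfShift (hx : IsFractionalVertexCover_s10 G x)
    (hC : G.IsVertexCover C) : G.IsVertexCover (halfShift x C) := by
  intro u v huv
  have hsum := hx.one_le_add u v huv
  have hcov : u ∈ C ∨ v ∈ C := hC huv
  have hhalf : 1 / 2 < x u ∨ 1 / 2 < x v ∨ (x u = 1 / 2 ∧ x v = 1 / 2) := by grind
  simp only [mem_coe, mem_halfShift]
  rcases hhalf with hu | hv | ⟨hu, hv⟩
  · exact .inl (.inr hu)
  · exact .inr (.inr hv)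
  · exact hcov.imp (fun huC ↦ .inl ⟨huC, hu.ge⟩) fun hvC ↦ .inl ⟨hvC, hv.ge⟩

theorem one_le_tilt_halfShift_add (hx : IsFractionalVertexCover_s10 G x) (hC : G.IsVertexCover C)
    (hε : 0 ≤ ε) (hεx : 1 / 2 + ε ≤ x v) (huv : G.Adj u v) (hvC : v ∉ C) (hv : 1 / 2 < x v) :
    1 ≤ tilt x ε C (halfShift x C) u + tilt x ε C (halfShift x C) v := by
  have huC : u ∈ C := (hC huv).resolve_right hvC
  rw [tilt_halfShift_of_notMem_of_lt hvC hv]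
  rcases lt_or_ge (x u) (1 / 2) with hu | hu
  · rw [tilt_halfShift_of_mem_of_lt huC hu]
    linarith [hx.one_le_add u v huv]
  · linarith [le_tilt_halfShift (x := x) hε fun _ ↦ huC]

theorem tilt_halfShift (hx : IsFractionalVertexCover_s10 G x) (hC : G.IsVertexCover C)
    (hε : 0 ≤ ε) (hεx : ∀ v, 1 / 2 < x v → 1 / 2 + ε ≤ x v) :
    IsFractionalVertexCover_s10 G (tilt x ε C (halfShift x C)) where
  nonneg v := by
    by_cases hv : 1 / 2 < x v → v ∈ C
    · exact (hx.nonneg v).trans (le_tilt_halfShift hε hv)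
    · push Not at hv
      rw [tilt_halfShift_of_notMem_of_lt hv.2 hv.1]
      linarith [hεx v hv.1]
  one_le_add u v huv := by
    by_cases hu : 1 / 2 < x u → u ∈ C
    · by_cases hv : 1 / 2 < x v → v ∈ C
      · linarith [hx.one_le_add u v huv, le_tilt_halfShift hε hu, le_tilt_halfShift hε hv]
      · push Not at hv
        exact hx.one_le_tilt_halfShift_add hC hε (hεx v hv.1) huv hv.2 hv.1
    · push Not at hu
      rw [add_comm]
      exact hx.one_le_tilt_halfShift_add hC hε (hεx u hu.1) huv.symm hu.2 hu.1

end IsFractionalVertexCover_s10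

theorem IsMinFractionalVertexCover.sum_halfShift_le (hx : IsMinFractionalVertexCover G w x)
    (hC : G.IsVertexCover C) : ∑ v ∈ halfShift x C, w v ≤ ∑ v ∈ C, w v := by
  obtain ⟨ε, hε, hεx⟩ := exists_pos_forall_lt_add_le x (1 / 2)
  have hle := hx.sum_le _ (hx.tilt_halfShift hC hε.le hεx)
  rw [sum_mul_tilt, le_add_iff_nonneg_right] at hle
  exact sub_nonneg.1 (nonneg_of_mul_nonneg_right hle hε)

theorem IsMinWeightVertexCover_s10.halfShift (hC : IsMinWeightVertexCover_s10 G w C)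
    (hx : IsMinFractionalVertexCover G w x) : IsMinWeightVertexCover_s10 G w (halfShift x C) where
  isVertexCover := hx.isVertexCover_halfShift hC.isVertexCover
  sum_le D hD := (hx.sum_halfShift_le hC.isVertexCover).trans (hC.sum_le D hD)

end VertexCover

theorem shifted_min_vertexCover_general {K V : Type*} [Field K] [LinearOrder K]
    [IsStrictOrderedRing K] [Fintype V] [DecidableEq V] {G : SimpleGraph V} {w x : V → K}
    (hx : IsMinFractionalVertexCover G w x) {V0 V12 V1 : Finset V}
    (hV0 : ∀ v, v ∈ V0 ↔ x v < 1 / 2) (hV12 : ∀ v, v ∈ V12 ↔ x v = 1 / 2)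
    (hV1 : ∀ v, v ∈ V1 ↔ 1 / 2 < x v) {C : Finset V} (hC : IsMinWeightVertexCover_s10 G w C) :
    IsMinWeightVertexCover_s10 G w ((C \ V0) ∪ V1) ∧
      V1 ⊆ (C \ V0) ∪ V1 ∧ (C \ V0) ∪ V1 ⊆ V1 ∪ V12 := by
  have hS : (C \ V0) ∪ V1 = halfShift x C := by
    ext v
    simp [mem_halfShift, hV0, hV1]
  refine ⟨hS ▸ hC.halfShift hx, subset_union_right, fun v hv ↦ ?_⟩
  rw [hS, mem_halfShift] at hv
  have hle : 1 / 2 ≤ x v := hv.elim And.right le_of_lt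
  rw [mem_union, hV1, hV12]
  exact hle.lt_or_eq.imp_right Eq.symm

/-- For an optimal half-integral LP solution `x` with level sets
`V₀, V_{1/2}, V₁`, and a minimum-weight vertex cover `Sopt` of `G`, the set
`S = (Sopt \ V₀) ∪ V₁` is also a minimum-weight vertex cover of `G`, and it satisfies
`V₁ ⊆ S ⊆ V₁ ∪ V_{1/2}`. -/
theorem shifted_min_vertexCover {V : Type*} [Fintype V] [DecidableEq V]
    (G : SimpleGraph V) (w : V → ℝ) (hw : ∀ v, 0 < w v)
    (x : V → ℝ)
    (hx0 : ∀ v, 0 ≤ x v)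
    (hxE : ∀ u v, G.Adj u v → 1 ≤ x u + x v)
    (hHalf : ∀ v, x v = 0 ∨ x v = 1/2 ∨ x v = 1)
    (hopt : ∀ y : V → ℝ, (∀ v, 0 ≤ y v) → (∀ u v, G.Adj u v → 1 ≤ y u + y v) →
      ∑ v, w v * x v ≤ ∑ v, w v * y v)
    (V0 V12 V1 : Finset V)
    (hV0 : ∀ v, v ∈ V0 ↔ x v = 0)
    (hV12 : ∀ v, v ∈ V12 ↔ x v = 1/2)
    (hV1 : ∀ v, v ∈ V1 ↔ x v = 1)
    (Sopt : Finset V)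
    (hSopt : ∀ u v, G.Adj u v → u ∈ Sopt ∨ v ∈ Sopt)
    (hSoptMin : ∀ C : Finset V, (∀ u v, G.Adj u v → u ∈ C ∨ v ∈ C) →
      ∑ v ∈ Sopt, w v ≤ ∑ v ∈ C, w v) :
    (∀ u v, G.Adj u v → u ∈ (Sopt \ V0) ∪ V1 ∨ v ∈ (Sopt \ V0) ∪ V1) ∧
    (∀ C : Finset V, (∀ u v, G.Adj u v → u ∈ C ∨ v ∈ C) →
      ∑ v ∈ (Sopt \ V0) ∪ V1, w v ≤ ∑ v ∈ C, w v) ∧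
    V1 ⊆ (Sopt \ V0) ∪ V1 ∧ (Sopt \ V0) ∪ V1 ⊆ V1 ∪ V12 := by
  obtain ⟨hS, hsub⟩ := shifted_min_vertexCover_general (V0 := V0) (V12 := V12) (V1 := V1)
    ⟨⟨hx0, hxE⟩, fun y hy ↦ hopt y hy.nonneg hy.one_le_add⟩ (by grind) hV12 (by grind)
    ⟨fun u v ↦ hSopt u v, fun D hD ↦ hSoptMin D fun u v huv ↦ hD huv⟩
  exact ⟨fun u v huv ↦ hS.isVertexCover huv, fun D hD ↦ hS.sum_le D fun u v ↦ hD u v, hsub⟩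
end

section
/- Let x be an optimal half-integral solution of the vertex-cover LP of G, with V_0, V_{1/2}, V_1 the sets of vertices where x equals 0, 1/2, 1 respectively, and let G[V_{1/2}] denote the induced subgraph of G on V_{1/2}. If C is a minimum-weight vertex cover of G[V_{1/2}], then C ∪ V_1 is a minimum-weight vertex cover of G. -/
/-!
Let `D` be a vertex cover of `G`. Lower an optimal LP solution `x` by a small `ε` at the vertices
outside `D` with value above `1/2`, and raise it by `ε` at the vertices of `D` with value below
`1/2`. The result is feasible: the other endpoint of an edge at a lowered vertex lies in `D`, so it
is raised or has value at least `1/2`. Optimality gives `w({x > 1/2} \ D) ≤ w(D ∩ {x < 1/2})`. As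
`D ∩ {x = 1/2}` covers the subgraph induced on `{x = 1/2}`, it weighs at least as much as `C`, and
adding the weight of the rest of `D` yields `w(C ∪ {x > 1/2}) ≤ w(D)`. For half-integral `x` the
set `{x > 1/2}` is `V₁`.
-/

open Finset

section

variable {V 𝕜 : Type*} [Field 𝕜] [LinearOrder 𝕜] {G : SimpleGraph V} {w x d : V → 𝕜}

/-- Feasibility of an assignment for the vertex-cover LP of `G`. -/
structure IsFeasibleLPVC (G : SimpleGraph V) (x : V → 𝕜) : Prop where
  nonneg : ∀ v, 0 ≤ x v
  one_le_add : ∀ u v, G.Adj u v → 1 ≤ x u + x v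

/-- Optimality of an assignment for the vertex-cover LP of `G` with vertex weights `w`; the value
of `x` is written as the dot product `w ⬝ᵥ x`. -/
structure IsOptimalLPVC [Fintype V] (G : SimpleGraph V) (w x : V → 𝕜) : Prop extends
    IsFeasibleLPVC G x where
  le_of_isFeasibleLPVC : ∀ y, IsFeasibleLPVC G y → w ⬝ᵥ x ≤ w ⬝ᵥ y

/-- The direction in which an LP solution `x` is perturbed to compare it with a vertex cover `D`:
up on `D ∩ {x < 1/2}`, down on `{x > 1/2} \ D`. -/
def exchangeDirection [DecidableEq V] (x : V → 𝕜) (D : Finset V) (v : V) : 𝕜 :=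
  if v ∈ D then (if x v < 1 / 2 then 1 else 0) else (if 1 / 2 < x v then -1 else 0)

theorem dotProduct_exchangeDirection [Fintype V] [DecidableEq V] (w : V → 𝕜)
    {V12 V1 : Finset V} (hV12 : ∀ v, v ∈ V12 ↔ x v = 1 / 2) (hV1 : ∀ v, v ∈ V1 ↔ 1 / 2 < x v)
    (D : Finset V) :
    w ⬝ᵥ exchangeDirection x D = ∑ v ∈ D, w v - ∑ v ∈ D ∩ V12, w v - ∑ v ∈ V1, w v := by
  rw [dotProduct, ← sum_ite_mem_eq D, ← sum_ite_mem_eq (D ∩ V12), ← sum_ite_mem_eq V1,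
    ← sum_sub_distrib, ← sum_sub_distrib]
  refine sum_congr rfl fun v _ ↦ ?_
  simp only [exchangeDirection, mem_inter, hV12, hV1]
  split_ifs <;> grind

variable [IsStrictOrderedRing 𝕜]

theorem IsFeasibleLPVC.isVertexCover_union [DecidableEq V] (hx : IsFeasibleLPVC G x)
    {V12 V1 C : Finset V} (hV12 : ∀ v, v ∈ V12 ↔ x v = 1 / 2) (hV1 : ∀ v, v ∈ V1 ↔ 1 / 2 < x v)
    (hC : (G.induce (V12 : Set V)).IsVertexCover (Subtype.val ⁻¹' (C : Set V))) :
    G.IsVertexCover (C ∪ V1 : Finset V) := by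
  intro u v huv
  simp only [mem_coe, mem_union, hV1]
  by_cases hu : 1 / 2 < x u
  · exact .inl (.inr hu)
  by_cases hv : 1 / 2 < x v
  · exact .inr (.inr hv)
  have hsum := hx.one_le_add u v huv
  have hu12 : u ∈ V12 := (hV12 u).2 (by linarith)
  have hv12 : v ∈ V12 := (hV12 v).2 (by linarith)
  exact (hC (v := ⟨u, hu12⟩) (w := ⟨v, hv12⟩) huv).imp .inl .inl

theorem half_le_add_mul_exchangeDirection [DecidableEq V] {D : Finset V} {ε : 𝕜} {v : V}
    (hgap : 1 / 2 < x v → 1 / 2 + ε ≤ x v) (hv : 1 / 2 ≤ x v) :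
    1 / 2 ≤ x v + ε * exchangeDirection x D v := by
  unfold exchangeDirection
  split_ifs <;> grind

theorem IsFeasibleLPVC.add_smul_exchangeDirection [DecidableEq V] (hx : IsFeasibleLPVC G x)
    {D : Finset V} (hD : G.IsVertexCover D) {ε : 𝕜} (hε : 0 ≤ ε)
    (hgap : ∀ v, 1 / 2 < x v → 1 / 2 + ε ≤ x v) :
    IsFeasibleLPVC G (x + ε • exchangeDirection x D) where
  nonneg v := by
    simp only [Pi.add_apply, Pi.smul_apply, smul_eq_mul]
    rcases lt_or_ge (x v) (1 / 2) with hv | hv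
    · have hdir : 0 ≤ exchangeDirection x D v := by grind [exchangeDirection]
      exact add_nonneg (hx.nonneg v) (mul_nonneg hε hdir)
    · exact one_half_pos.le.trans (half_le_add_mul_exchangeDirection (hgap v) hv)
  one_le_add u v huv := by
    simp only [Pi.add_apply, Pi.smul_apply, smul_eq_mul]
    by_cases! hhalf : 1 / 2 ≤ x u ∧ 1 / 2 ≤ x v
    · have hu := half_le_add_mul_exchangeDirection (D := D) (hgap u) hhalf.1
      have hv := half_le_add_mul_exchangeDirection (D := D) (hgap v) hhalf.2
      linarith
    -- One endpoint is below `1/2`, the other above, and the latter drops only if the former rises.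
    · have hcover : u ∈ D ∨ v ∈ D := hD huv
      have hsum := hx.one_le_add u v huv
      have hdir : 0 ≤ exchangeDirection x D u + exchangeDirection x D v := by
        grind [exchangeDirection]
      linarith [mul_nonneg hε hdir]

section Finite

variable [Fintype V]

theorem IsOptimalLPVC.dotProduct_nonneg_of_isFeasibleLPVC (hx : IsOptimalLPVC G w x) {ε : 𝕜}
    (hε : 0 < ε) (hd : IsFeasibleLPVC G (x + ε • d)) : 0 ≤ w ⬝ᵥ d := by
  have hle := hx.le_of_isFeasibleLPVC _ hd
  rw [dotProduct_add, dotProduct_smul, smul_eq_mul, le_add_iff_nonneg_right] at hle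
  exact nonneg_of_mul_nonneg_right hle hε

variable [DecidableEq V]

theorem IsOptimalLPVC.dotProduct_exchangeDirection_nonneg (hx : IsOptimalLPVC G w x)
    {D : Finset V} (hD : G.IsVertexCover D) : 0 ≤ w ⬝ᵥ exchangeDirection x D := by
  obtain ⟨ε, hε, hgap⟩ := Pi.exists_forall_pos_add_lt fun v : {v // 1 / 2 < x v} ↦ v.2
  exact hx.dotProduct_nonneg_of_isFeasibleLPVC hε <|
    hx.add_smul_exchangeDirection hD hε.le fun v hv ↦ (hgap ⟨v, hv⟩).le

theorem min_vc_of_induced_union_V1_general (hx : IsOptimalLPVC G w x) {V12 V1 C : Finset V}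
    (hV12 : ∀ v, v ∈ V12 ↔ x v = 1 / 2) (hV1 : ∀ v, v ∈ V1 ↔ 1 / 2 < x v) (hCsub : C ⊆ V12)
    (hCcov : (G.induce (V12 : Set V)).IsVertexCover (Subtype.val ⁻¹' (C : Set V)))
    (hCmin : ∀ D ⊆ V12, (G.induce (V12 : Set V)).IsVertexCover (Subtype.val ⁻¹' (D : Set V)) →
      ∑ v ∈ C, w v ≤ ∑ v ∈ D, w v) :
    G.IsVertexCover (C ∪ V1 : Finset V) ∧
      ∀ D : Finset V, G.IsVertexCover D → ∑ v ∈ C ∪ V1, w v ≤ ∑ v ∈ D, w v := by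
  refine ⟨hx.isVertexCover_union hV12 hV1 hCcov, fun D hD ↦ ?_⟩
  have hdisj : Disjoint C V1 := disjoint_left.2 fun v hC h1 ↦
    ((hV1 v).1 h1).ne' ((hV12 v).1 (hCsub hC))
  have hle : ∑ v ∈ C, w v ≤ ∑ v ∈ D ∩ V12, w v := hCmin _ inter_subset_right fun u v huv ↦
    (hD huv).imp (mem_inter.2 ⟨·, u.2⟩) (mem_inter.2 ⟨·, v.2⟩)
  have hexch := hx.dotProduct_exchangeDirection_nonneg hD
  rw [dotProduct_exchangeDirection w hV12 hV1] at hexch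
  rw [sum_union hdisj]
  linarith

end Finite

end

/-- For an optimal half-integral LP solution `x` with level sets
`V₀, V_{1/2}, V₁`, if `C` is a minimum-weight vertex cover of the induced subgraph
`G[V_{1/2}]`, then `C ∪ V₁` is a minimum-weight vertex cover of `G`. -/
theorem min_vc_of_induced_union_V1 {V : Type*} [Fintype V] [DecidableEq V]
    (G : SimpleGraph V) (w : V → ℝ) (hw : ∀ v, 0 < w v)
    (x : V → ℝ)
    (hx0 : ∀ v, 0 ≤ x v)
    (hxE : ∀ u v, G.Adj u v → 1 ≤ x u + x v)
    (hHalf : ∀ v, x v = 0 ∨ x v = 1/2 ∨ x v = 1)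
    (hopt : ∀ y : V → ℝ, (∀ v, 0 ≤ y v) → (∀ u v, G.Adj u v → 1 ≤ y u + y v) →
      ∑ v, w v * x v ≤ ∑ v, w v * y v)
    (V0 V12 V1 : Finset V)
    (hV0 : ∀ v, v ∈ V0 ↔ x v = 0)
    (hV12 : ∀ v, v ∈ V12 ↔ x v = 1/2)
    (hV1 : ∀ v, v ∈ V1 ↔ x v = 1)
    (C : Finset V)
    (hCsub : C ⊆ V12)
    (hCcov : ∀ u v, u ∈ V12 → v ∈ V12 → G.Adj u v → u ∈ C ∨ v ∈ C)
    (hCmin : ∀ D : Finset V, D ⊆ V12 →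
      (∀ u v, u ∈ V12 → v ∈ V12 → G.Adj u v → u ∈ D ∨ v ∈ D) →
      ∑ v ∈ C, w v ≤ ∑ v ∈ D, w v) :
    (∀ u v, G.Adj u v → u ∈ C ∪ V1 ∨ v ∈ C ∪ V1) ∧
    (∀ D : Finset V, (∀ u v, G.Adj u v → u ∈ D ∨ v ∈ D) →
      ∑ v ∈ C ∪ V1, w v ≤ ∑ v ∈ D, w v) := by
  have hV1_iff_lt (v : V) : v ∈ V1 ↔ 1 / 2 < x v := by grind
  exact min_vc_of_induced_union_V1_general ⟨⟨hx0, hxE⟩, fun y hy ↦ hopt y hy.nonneg hy.one_le_add⟩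
    hV12 hV1_iff_lt hCsub (fun u v ↦ hCcov u v u.2 v.2) fun D hD hcov ↦
      hCmin D hD fun u v hu hv huv ↦ hcov (v := ⟨u, hu⟩) (w := ⟨v, hv⟩) huv
end

section
/- Let x be an optimal half-integral solution of the vertex-cover LP of G, with V_{1/2} = {v : x_v = 1/2} and V_1 = {v : x_v = 1}. Then every optimal feasible solution y of the vertex-cover LP of the induced subgraph G[V_{1/2}] satisfies val(y) = val(x) − w(V_1) = w(V_{1/2})/2. -/
/-!
Replacing the values of `x` on `V_{1/2}` by those of a feasible solution `y` of `G[V_{1/2}]` keeps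
`x` feasible: an edge leaving `V_{1/2}` ends in `V₁`, so it is already covered from outside. Hence
optimality of `x` passes to its restriction to `V_{1/2}`, which is constantly `1/2`, and all optimal
solutions of `G[V_{1/2}]` share its value.
-/

section

variable {V R : Type*} [Semiring R] [PartialOrder R]
  {G : SimpleGraph V} {w x y : V → R} {S T : Finset V}

/-- Feasibility for the vertex-cover LP of the induced subgraph `G[S]`. Assignments are functions
on all of `V`, and their values outside `S` are irrelevant. -/
structure IsLPVCFeasible (G : SimpleGraph V) (S : Finset V) (x : V → R) : Prop where
  nonneg : ∀ v ∈ S, 0 ≤ x v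
  one_le_add : ∀ u v, u ∈ S → v ∈ S → G.Adj u v → 1 ≤ x u + x v

/-- Optimality for the vertex-cover LP of the induced subgraph `G[S]` with vertex weights `w`,
with the same convention on values outside `S` as `IsLPVCFeasible`. -/
structure IsLPVCOptimal (G : SimpleGraph V) (w : V → R) (S : Finset V) (x : V → R) : Prop
    extends IsLPVCFeasible G S x where
  le_of_feasible : ∀ z, IsLPVCFeasible G S z → ∑ v ∈ S, w v * x v ≤ ∑ v ∈ S, w v * z v

theorem IsLPVCFeasible.mono (hx : IsLPVCFeasible G T x) (hST : S ⊆ T) : IsLPVCFeasible G S x where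
  nonneg v hv := hx.nonneg v (hST hv)
  one_le_add u v hu hv := hx.one_le_add u v (hST hu) (hST hv)

theorem IsLPVCFeasible.piecewise [IsOrderedAddMonoid R] [∀ v, Decidable (v ∈ S)]
    (hy : IsLPVCFeasible G S y) (hx : IsLPVCFeasible G T x)
    (hboundary : ∀ u ∈ S, ∀ v ∈ T, v ∉ S → G.Adj u v → 1 ≤ x v) :
    IsLPVCFeasible G T (S.piecewise y x) where
  nonneg v hv := by
    by_cases hvS : v ∈ S
    · simpa only [S.piecewise_eq_of_mem _ _ hvS] using hy.nonneg v hvS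
    · simpa only [S.piecewise_eq_of_notMem _ _ hvS] using hx.nonneg v hv
  one_le_add u v hu hv huv := by
    by_cases huS : u ∈ S <;> by_cases hvS : v ∈ S <;>
      simp only [Finset.piecewise, huS, hvS, if_true, if_false]
    · exact hy.one_le_add u v huS hvS huv
    · exact le_add_of_nonneg_of_le (hy.nonneg u huS) (hboundary u huS v hv hvS huv)
    · exact le_add_of_le_of_nonneg (hboundary v hvS u hu huS huv.symm) (hy.nonneg v hvS)
    · exact hx.one_le_add u v hu hv huv

theorem IsLPVCOptimal.restrict [IsOrderedCancelAddMonoid R] (hx : IsLPVCOptimal G w T x)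
    (hST : S ⊆ T) (hboundary : ∀ u ∈ S, ∀ v ∈ T, v ∉ S → G.Adj u v → 1 ≤ x v) :
    IsLPVCOptimal G w S x where
  toIsLPVCFeasible := hx.mono hST
  le_of_feasible z hz := by
    classical
    have hglue := hx.le_of_feasible _ (hz.piecewise hx.toIsLPVCFeasible hboundary)
    have hinside : ∑ v ∈ S, w v * S.piecewise z x v = ∑ v ∈ S, w v * z v :=
      Finset.sum_congr rfl fun v hv => by rw [S.piecewise_eq_of_mem _ _ hv]
    have houtside : ∑ v ∈ T \ S, w v * S.piecewise z x v = ∑ v ∈ T \ S, w v * x v :=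
      Finset.sum_congr rfl fun v hv => by
        rw [S.piecewise_eq_of_notMem _ _ (Finset.mem_sdiff.1 hv).2]
    rw [← Finset.sum_sdiff hST, ← Finset.sum_sdiff hST, houtside, hinside] at hglue
    exact le_of_add_le_add_left hglue

theorem IsLPVCOptimal.value_eq (hx : IsLPVCOptimal G w S x) (hy : IsLPVCOptimal G w S y) :
    ∑ v ∈ S, w v * x v = ∑ v ∈ S, w v * y v :=
  le_antisymm (hx.le_of_feasible y hy.toIsLPVCFeasible) (hy.le_of_feasible x hx.toIsLPVCFeasible)

end

section HalfIntegral

variable {V K : Type*} [Field K] [LinearOrder K] [IsStrictOrderedRing K]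
  {G : SimpleGraph V} {w x y : V → K} {T : Finset V}

/-- Half-integrality of an assignment on the vertices in `T`. -/
def IsHalfIntegralOn (T : Finset V) (x : V → K) : Prop :=
  ∀ v ∈ T, x v = 0 ∨ x v = 1 / 2 ∨ x v = 1

theorem IsHalfIntegralOn.sum_mul_eq (hx : IsHalfIntegralOn T x) (w : V → K) :
    ∑ v ∈ T, w v * x v = (∑ v ∈ T with x v = 1 / 2, w v) / 2 + ∑ v ∈ T with x v = 1, w v := by
  rw [Finset.sum_div, Finset.sum_filter, Finset.sum_filter, ← Finset.sum_add_distrib]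
  refine Finset.sum_congr rfl fun v hv => ?_
  rcases hx v hv with h | h | h <;> norm_num [h, div_eq_mul_inv]

theorem IsHalfIntegralOn.eq_one_of_adj_half (hhalf : IsHalfIntegralOn T x)
    (hx : IsLPVCFeasible G T x) {u v : V} (hu : u ∈ T) (hv : v ∈ T) (huv : G.Adj u v)
    (hxu : x u = 1 / 2) (hxv : x v ≠ 1 / 2) : x v = 1 := by
  have hcover := hx.one_le_add u v hu hv huv
  rcases hhalf v hv with h | h | h
  · norm_num [hxu, h] at hcover
  · exact absurd h hxv
  · exact h

theorem IsLPVCOptimal.restrict_half (hx : IsLPVCOptimal G w T x) (hhalf : IsHalfIntegralOn T x) :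
    IsLPVCOptimal G w {v ∈ T | x v = 1 / 2} x := by
  refine hx.restrict (Finset.filter_subset _ _) fun u hu v hv hv' huv => ?_
  obtain ⟨huT, hxu⟩ := Finset.mem_filter.1 hu
  have hxv : x v ≠ 1 / 2 := fun h => hv' (Finset.mem_filter.2 ⟨hv, h⟩)
  exact (hhalf.eq_one_of_adj_half hx.toIsLPVCFeasible huT hv huv hxu hxv).ge

theorem induced_LP_opt_value_general (hx : IsLPVCOptimal G w T x) (hhalf : IsHalfIntegralOn T x)
    (hy : IsLPVCOptimal G w {v ∈ T | x v = 1 / 2} y) :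
    ∑ v ∈ T with x v = 1 / 2, w v * y v = ∑ v ∈ T, w v * x v - ∑ v ∈ T with x v = 1, w v ∧
    ∑ v ∈ T with x v = 1 / 2, w v * y v = (∑ v ∈ T with x v = 1 / 2, w v) / 2 := by
  have hvalue : ∑ v ∈ T with x v = 1 / 2, w v * y v = (∑ v ∈ T with x v = 1 / 2, w v) / 2 :=
    calc ∑ v ∈ T with x v = 1 / 2, w v * y v
        = ∑ v ∈ T with x v = 1 / 2, w v * x v := hy.value_eq (hx.restrict_half hhalf)
      _ = ∑ v ∈ T with x v = 1 / 2, w v / 2 := Finset.sum_congr rfl fun v hv => by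
          rw [(Finset.mem_filter.1 hv).2, mul_one_div]
      _ = (∑ v ∈ T with x v = 1 / 2, w v) / 2 := (Finset.sum_div ..).symm
  exact ⟨by rw [hvalue, hhalf.sum_mul_eq w, add_sub_cancel_right], hvalue⟩

end HalfIntegral

/-- For an optimal half-integral LP solution `x` of `G` with level sets
`V_{1/2}, V₁`, every optimal feasible solution `y` of the vertex-cover LP of the induced
subgraph `G[V_{1/2}]` satisfies `val(y) = val(x) - w(V₁) = w(V_{1/2})/2`. -/
theorem induced_LP_opt_value {V : Type*} [Fintype V] [DecidableEq V]
    (G : SimpleGraph V) (w : V → ℝ) (hw : ∀ v, 0 < w v)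
    (x : V → ℝ)
    (hx0 : ∀ v, 0 ≤ x v)
    (hxE : ∀ u v, G.Adj u v → 1 ≤ x u + x v)
    (hHalf : ∀ v, x v = 0 ∨ x v = 1/2 ∨ x v = 1)
    (hopt : ∀ y : V → ℝ, (∀ v, 0 ≤ y v) → (∀ u v, G.Adj u v → 1 ≤ y u + y v) →
      ∑ v, w v * x v ≤ ∑ v, w v * y v)
    (V12 V1 : Finset V)
    (hV12 : ∀ v, v ∈ V12 ↔ x v = 1/2)
    (hV1 : ∀ v, v ∈ V1 ↔ x v = 1)
    (y : V → ℝ)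
    (hy0 : ∀ v ∈ V12, 0 ≤ y v)
    (hyE : ∀ u v, u ∈ V12 → v ∈ V12 → G.Adj u v → 1 ≤ y u + y v)
    (hyOpt : ∀ z : V → ℝ, (∀ v ∈ V12, 0 ≤ z v) →
      (∀ u v, u ∈ V12 → v ∈ V12 → G.Adj u v → 1 ≤ z u + z v) →
      ∑ v ∈ V12, w v * y v ≤ ∑ v ∈ V12, w v * z v) :
    ∑ v ∈ V12, w v * y v = ∑ v, w v * x v - ∑ v ∈ V1, w v ∧
    ∑ v ∈ V12, w v * y v = (∑ v ∈ V12, w v) / 2 := by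
  obtain rfl : V12 = ({v | x v = 1/2} : Finset V) := by ext v; simp [hV12]
  obtain rfl : V1 = ({v | x v = 1} : Finset V) := by ext v; simp [hV1]
  exact induced_LP_opt_value_general
    ⟨⟨fun v _ => hx0 v, fun u v _ _ => hxE u v⟩,
      fun z hz => hopt z (fun v => hz.nonneg v (Finset.mem_univ v))
        fun u v => hz.one_le_add u v (Finset.mem_univ u) (Finset.mem_univ v)⟩
    (fun v _ => hHalf v)
    ⟨⟨hy0, hyE⟩, fun z hz => hyOpt z hz.nonneg hz.one_le_add⟩
end

section
/- Let x be an optimal half-integral solution of the vertex-cover LP of G, with V_{1/2} = {v : x_v = 1/2}. Then the restriction of x to V_{1/2} (i.e., the all-1/2 assignment) is a feasible and optimal solution of the vertex-cover LP of the induced subgraph G[V_{1/2}]. -/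
/-! An edge joining `V_{1/2}` to its complement is slack: its far endpoint has value at least `1/2`,
but not `1/2`. Hence every feasible solution of `G[V_{1/2}]` close enough to `x` extends by the
values of `x` to a feasible solution of `G`, so `x` is a local minimum of the program of
`G[V_{1/2}]`. In a linear program, local minima are global. -/

open Filter Topology

section

variable {V : Type*} {G : SimpleGraph V} {w : V → ℝ} {S T : Finset V} {x y : V → ℝ}

/-- The feasible region of the vertex-cover LP of the induced subgraph `G[S]`. Solutions are
functions on all of `V`, whose values outside `S` are unconstrained. -/
def vertexCoverPolyhedron (G : SimpleGraph V) (S : Finset V) : Set (V → ℝ) :=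
  {x | (∀ v ∈ S, 0 ≤ x v) ∧ ∀ u v, u ∈ S → v ∈ S → G.Adj u v → 1 ≤ x u + x v}

/-- The objective of the vertex-cover LP of an induced subgraph on `S`, as a linear functional on
functions on all of `V`. -/
def vertexCoverValue (w : V → ℝ) (S : Finset V) : (V → ℝ) →ₗ[ℝ] ℝ :=
  ∑ v ∈ S, w v • LinearMap.proj v

/-- `x` restricts to an optimal solution of the vertex-cover LP of the induced subgraph `G[S]`. -/
structure IsVertexCoverLPOptimal (G : SimpleGraph V) (w : V → ℝ) (S : Finset V) (x : V → ℝ) :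
    Prop where
  feasible : x ∈ vertexCoverPolyhedron G S
  isMinOn : IsMinOn (vertexCoverValue w S) (vertexCoverPolyhedron G S) x

theorem vertexCoverValue_apply (w : V → ℝ) (S : Finset V) (x : V → ℝ) :
    vertexCoverValue w S x = ∑ v ∈ S, w v * x v := by
  simp [vertexCoverValue]

theorem isVertexCoverLPOptimal_iff :
    IsVertexCoverLPOptimal G w S x ↔
      (∀ v ∈ S, 0 ≤ x v) ∧ (∀ u v, u ∈ S → v ∈ S → G.Adj u v → 1 ≤ x u + x v) ∧
        ∀ y : V → ℝ, (∀ v ∈ S, 0 ≤ y v) →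
          (∀ u v, u ∈ S → v ∈ S → G.Adj u v → 1 ≤ y u + y v) →
            ∑ v ∈ S, w v * x v ≤ ∑ v ∈ S, w v * y v := by
  simp only [← vertexCoverValue_apply]
  exact ⟨fun hx => ⟨hx.feasible.1, hx.feasible.2,
      fun y hy hyE => isMinOn_iff.1 hx.isMinOn y ⟨hy, hyE⟩⟩,
    fun ⟨hx, hxE, hmin⟩ => ⟨⟨hx, hxE⟩, isMinOn_iff.2 fun y hy => hmin y hy.1 hy.2⟩⟩

theorem vertexCoverPolyhedron_anti (h : S ⊆ T) :
    vertexCoverPolyhedron G T ⊆ vertexCoverPolyhedron G S :=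
  fun _ hx => ⟨fun v hv => hx.1 v (h hv), fun u v hu hv => hx.2 u v (h hu) (h hv)⟩

theorem convex_vertexCoverPolyhedron (G : SimpleGraph V) (S : Finset V) :
    Convex ℝ (vertexCoverPolyhedron G S) := by
  intro x hx y hy a b ha hb hab
  refine ⟨fun v hv => add_nonneg (mul_nonneg ha (hx.1 v hv)) (mul_nonneg hb (hy.1 v hv)),
    fun u v hu hv huv => ?_⟩
  calc
    1 = a * 1 + b * 1 := by rw [mul_one, mul_one, hab]
    _ ≤ a * (x u + x v) + b * (y u + y v) := by
      gcongr
      exacts [hx.2 u v hu hv huv, hy.2 u v hu hv huv]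
    _ = (a • x + b • y) u + (a • x + b • y) v := by
      simp only [Pi.add_apply, Pi.smul_apply, smul_eq_mul]
      ring

section Piecewise

variable [DecidableEq V]

theorem piecewise_mem_vertexCoverPolyhedron (hy : y ∈ vertexCoverPolyhedron G S)
    (hx : x ∈ vertexCoverPolyhedron G T)
    (hyx : ∀ u ∈ S, ∀ v ∈ T \ S, G.Adj u v → 1 ≤ y u + x v) :
    S.piecewise y x ∈ vertexCoverPolyhedron G T := by
  refine ⟨fun v hvT => ?_, fun u v huT hvT huv => ?_⟩
  · by_cases hv : v ∈ S
    · simpa only [S.piecewise_eq_of_mem _ _ hv] using hy.1 v hv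
    · simpa only [S.piecewise_eq_of_notMem _ _ hv] using hx.1 v hvT
  · simp only [Finset.piecewise]
    split_ifs with hu hv hv
    · exact hy.2 u v hu hv huv
    · exact hyx u hu v (Finset.mem_sdiff.2 ⟨hvT, hv⟩) huv
    · rw [add_comm]
      exact hyx v hv u (Finset.mem_sdiff.2 ⟨huT, hu⟩) huv.symm
    · exact hx.2 u v huT hvT huv

theorem vertexCoverValue_piecewise (h : S ⊆ T) (w x y : V → ℝ) :
    vertexCoverValue w T (S.piecewise y x) =
      vertexCoverValue w (T \ S) x + vertexCoverValue w S y := by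
  simp only [vertexCoverValue_apply]
  rw [← Finset.sum_sdiff h]
  congr 1
  · refine Finset.sum_congr rfl fun v hv => ?_
    rw [S.piecewise_eq_of_notMem _ _ (Finset.mem_sdiff.1 hv).2]
  · refine Finset.sum_congr rfl fun v hv => ?_
    rw [S.piecewise_eq_of_mem _ _ hv]

theorem IsVertexCoverLPOptimal.value_le_of_piecewise_mem (hx : IsVertexCoverLPOptimal G w T x)
    (h : S ⊆ T) (hy : S.piecewise y x ∈ vertexCoverPolyhedron G T) :
    vertexCoverValue w S x ≤ vertexCoverValue w S y := by
  have hle : vertexCoverValue w T (S.piecewise x x) ≤ vertexCoverValue w T (S.piecewise y x) := by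
    simpa only [Finset.piecewise_same] using isMinOn_iff.1 hx.isMinOn _ hy
  simpa only [vertexCoverValue_piecewise h, add_le_add_iff_left] using hle

theorem eventually_one_le_add_of_slack
    (hslack : ∀ u ∈ S, ∀ v ∈ T \ S, G.Adj u v → 1 < x u + x v) :
    ∀ᶠ y in 𝓝 x, ∀ u ∈ S, ∀ v ∈ T \ S, G.Adj u v → 1 ≤ y u + x v := by
  simp only [Finset.eventually_all, eventually_imp_distrib_left]
  intro u hu v hv huv
  have hcont : Continuous fun y : V → ℝ => y u + x v := by fun_prop
  exact (hcont.continuousAt.eventually_const_lt (hslack u hu v hv huv)).mono fun _ => le_of_lt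

theorem IsVertexCoverLPOptimal.restrict_of_slack (hx : IsVertexCoverLPOptimal G w T x) (h : S ⊆ T)
    (hslack : ∀ u ∈ S, ∀ v ∈ T \ S, G.Adj u v → 1 < x u + x v) :
    IsVertexCoverLPOptimal G w S x := by
  have hxS : x ∈ vertexCoverPolyhedron G S := vertexCoverPolyhedron_anti h hx.feasible
  have hlocal : IsLocalMinOn (vertexCoverValue w S) (vertexCoverPolyhedron G S) x := by
    filter_upwards [self_mem_nhdsWithin,
      nhdsWithin_le_nhds (eventually_one_le_add_of_slack hslack)] with y hy hyx
    exact hx.value_le_of_piecewise_mem h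
      (piecewise_mem_vertexCoverPolyhedron hy hx.feasible hyx)
  exact ⟨hxS, IsMinOn.of_isLocalMinOn_of_convexOn hxS hlocal
    ((vertexCoverValue w S).convexOn (convex_vertexCoverPolyhedron G S))⟩

end Piecewise

theorem restriction_optimal_for_induced_general (hx : IsVertexCoverLPOptimal G w T x) :
    IsVertexCoverLPOptimal G w {v ∈ T | x v = 1 / 2} x := by
  classical
  refine hx.restrict_of_slack (Finset.filter_subset _ _) fun u hu v hv huv => ?_
  obtain ⟨huT, hu_half⟩ := Finset.mem_filter.1 hu
  obtain ⟨hvT, hvS⟩ := Finset.mem_sdiff.1 hv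
  have hv_ne : x v ≠ 1 / 2 := fun hv_half => hvS (Finset.mem_filter.2 ⟨hvT, hv_half⟩)
  have hv_ge : 1 / 2 ≤ x v := by linarith [hx.feasible.2 u v huT hvT huv]
  linarith [hv_ge.lt_of_ne' hv_ne]

end

/-- For an optimal half-integral LP solution `x` of `G` with
`V_{1/2} = {v : x v = 1/2}`, the restriction of `x` to `V_{1/2}` (the all-1/2 assignment)
is a feasible and optimal solution of the vertex-cover LP of the induced subgraph
`G[V_{1/2}]`. -/
theorem restriction_optimal_for_induced {V : Type*} [Fintype V] [DecidableEq V]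
    (G : SimpleGraph V) (w : V → ℝ) (hw : ∀ v, 0 < w v)
    (x : V → ℝ)
    (hx0 : ∀ v, 0 ≤ x v)
    (hxE : ∀ u v, G.Adj u v → 1 ≤ x u + x v)
    (hHalf : ∀ v, x v = 0 ∨ x v = 1/2 ∨ x v = 1)
    (hopt : ∀ y : V → ℝ, (∀ v, 0 ≤ y v) → (∀ u v, G.Adj u v → 1 ≤ y u + y v) →
      ∑ v, w v * x v ≤ ∑ v, w v * y v)
    (V12 : Finset V)
    (hV12 : ∀ v, v ∈ V12 ↔ x v = 1/2) :
    (∀ v ∈ V12, 0 ≤ x v) ∧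
    (∀ u v, u ∈ V12 → v ∈ V12 → G.Adj u v → 1 ≤ x u + x v) ∧
    (∀ z : V → ℝ, (∀ v ∈ V12, 0 ≤ z v) →
      (∀ u v, u ∈ V12 → v ∈ V12 → G.Adj u v → 1 ≤ z u + z v) →
      ∑ v ∈ V12, w v * x v ≤ ∑ v ∈ V12, w v * z v) := by
  obtain rfl : V12 = ({v | x v = 1 / 2} : Finset V) := Finset.ext fun v => by simp [hV12]
  exact isVertexCoverLPOptimal_iff.1 <| restriction_optimal_for_induced_general <|
    isVertexCoverLPOptimal_iff.2 (by simpa using ⟨hx0, hxE, hopt⟩)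
end

section
/- Let x be an optimal half-integral solution of the vertex-cover LP of G, with V_{1/2} = {v : x_v = 1/2} and V_1 = {v : x_v = 1}, let 0 ≤ ε ≤ 1, and let I be an independent set of the induced subgraph G[V_{1/2}] with w(I) ≥ (1 − ε) · is*(G[V_{1/2}]). Then (V_{1/2} \ I) ∪ V_1 is a vertex cover of G of weight at most (1 + ε) · vc*(G). -/
/-!
Let `x` be an optimal LP solution. Moving a small amount of `x` from a set `S` of its support to the
neighbours joined to `S` by tight edges (those with `x u + x v = 1`) keeps `x` feasible, so `S`
weighs at most as much as these neighbours. Exchanging `B \ C` for `C \ B` in this way gives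
`w(B) ≤ w(C)` for a vertex cover `C` and two kinds of sets `B`: independent sets in the support of
`x`, and the set `(H ∩ C) ∪ P` of the Nemhauser–Trotter theorem, where `H = {x = 1/2}` and
`P = {x > 1/2}`. If `C` is optimal, then `H \ C` is independent, hence
`w((H \ I) ∪ P) ≤ w(C) + w(H \ C) - w(I) ≤ w(C) + ε is*(G[H]) ≤ (1 + ε) w(C)`.
-/

open Finset

section VertexCoverLP

variable {𝕜 V : Type*} [Field 𝕜] [LinearOrder 𝕜]

/-- A feasible solution of the vertex-cover LP of `G`.
As in the LP, values above `1` are allowed. -/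
structure IsFractionalVertexCover_s17 (G : SimpleGraph V) (x : V → 𝕜) : Prop where
  nonneg (v : V) : 0 ≤ x v
  one_le_add (u v : V) : G.Adj u v → 1 ≤ x u + x v

/-- An optimal solution of the vertex-cover LP of `G` with vertex weights `w`. -/
structure IsMinFractionalVertexCover_s17 [Fintype V] (G : SimpleGraph V) (w x : V → 𝕜) : Prop
    extends IsFractionalVertexCover_s17 G x where
  sum_le (y : V → 𝕜) : IsFractionalVertexCover_s17 G y → ∑ v, w v * x v ≤ ∑ v, w v * y v

variable [IsStrictOrderedRing 𝕜] {G : SimpleGraph V} {w x : V → 𝕜}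

theorem eq_one_iff_half_lt_of_halfIntegral {a : 𝕜} (ha : a = 0 ∨ a = 1 / 2 ∨ a = 1) :
    a = 1 ↔ 1 / 2 < a := by
  rcases ha with rfl | rfl | rfl <;> norm_num

theorem isIndepSet_coe_iff_forall_not_adj {J : Finset V} :
    G.IsIndepSet (J : Set V) ↔ ∀ u v, u ∈ J → v ∈ J → ¬ G.Adj u v :=
  ⟨fun hJ _ _ hu hv huv ↦ hJ hu hv huv.ne huv, fun hJ _ hu _ hv _ ↦ hJ _ _ hu hv⟩

theorem IsFractionalVertexCover_s17.isVertexCover_sdiff_union [DecidableEq V]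
    (hx : IsFractionalVertexCover_s17 G x) {H P I : Finset V} (hH : ∀ v, x v = 1 / 2 → v ∈ H)
    (hP : ∀ v, 1 / 2 < x v → v ∈ P) (hI : G.IsIndepSet (I : Set V)) :
    G.IsVertexCover ((H \ I ∪ P : Finset V) : Set V) := by
  intro u v huv
  by_contra! ⟨hu, hv⟩
  simp only [mem_coe, mem_union, mem_sdiff, not_or, not_and_not_right] at hu hv
  have hu_le : x u ≤ 1 / 2 := not_lt.mp (mt (hP u) hu.2)
  have hv_le : x v ≤ 1 / 2 := not_lt.mp (mt (hP v) hv.2)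
  have hsum := hx.one_le_add u v huv
  have huI : u ∈ I := hu.1 (hH u (by linarith))
  have hvI : v ∈ I := hv.1 (hH v (by linarith))
  exact hI huI hvI huv.ne huv

theorem IsFractionalVertexCover_s17.exists_pos_shift [Finite V] [DecidableEq V]
    (hx : IsFractionalVertexCover_s17 G x) {S T : Finset V} (hS : ∀ v ∈ S, 0 < x v)
    (hT : ∀ u ∈ S, ∀ v, G.Adj u v → x u + x v = 1 → v ∈ T) :
    ∃ δ > 0, IsFractionalVertexCover_s17 G fun v ↦
      x v + δ * ((if v ∈ T then 1 else 0) - if v ∈ S then 1 else 0) := by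
  obtain ⟨δ₁, hδ₁, hx_gt⟩ := Pi.exists_forall_pos_add_lt fun v : S ↦ hS v v.2
  obtain ⟨δ₂, hδ₂, hslack⟩ :=
    Pi.exists_forall_pos_add_lt fun e : {e : V × V // 1 < x e.1 + x e.2} ↦ e.2
  -- A slack edge with both ends in `S` loses twice the shift.
  obtain ⟨δ, hδ, hδ_le₁, hδ_le₂⟩ : ∃ δ > 0, δ ≤ δ₁ ∧ δ ≤ δ₂ / 2 :=
    ⟨min δ₁ (δ₂ / 2), lt_min hδ₁ (half_pos hδ₂), min_le_left .., min_le_right ..⟩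
  refine ⟨δ, hδ, fun v ↦ ?_, fun u v huv ↦ ?_⟩
  · have := hx.nonneg v
    have : v ∈ S → δ < x v := fun hv ↦ by linarith [hx_gt ⟨v, hv⟩]
    split_ifs <;> grind
  · rcases (hx.one_le_add u v huv).eq_or_lt with htight | hlt
    · have huT : u ∈ S → v ∈ T := fun hu ↦ hT u hu v huv htight.symm
      have hvT : v ∈ S → u ∈ T := fun hv ↦ hT v hv u huv.symm (by linarith)
      split_ifs <;> grind
    · have := hslack ⟨(u, v), hlt⟩
      split_ifs <;> grind

namespace IsMinFractionalVertexCover_s17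

variable [Fintype V]

theorem sum_le_sum_of_tight_neighbors (hx : IsMinFractionalVertexCover_s17 G w x) {S T : Finset V}
    (hS : ∀ v ∈ S, 0 < x v) (hT : ∀ u ∈ S, ∀ v, G.Adj u v → x u + x v = 1 → v ∈ T) :
    ∑ v ∈ S, w v ≤ ∑ v ∈ T, w v := by
  classical
  obtain ⟨δ, hδ, hy⟩ := hx.exists_pos_shift hS hT
  have hval : ∑ v, w v * (x v + δ * ((if v ∈ T then 1 else 0) - if v ∈ S then 1 else 0)) =
      ∑ v, w v * x v + δ * (∑ v ∈ T, w v - ∑ v ∈ S, w v) := by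
    simp only [mul_add, sum_add_distrib, mul_left_comm _ δ, ← mul_sum]
    simp [mul_sub]
  have hchange : 0 ≤ δ * (∑ v ∈ T, w v - ∑ v ∈ S, w v) := by
    linarith [hx.sum_le _ hy]
  exact sub_nonneg.mp (nonneg_of_mul_nonneg_right hchange hδ)

theorem sum_le_sum_vertexCover [DecidableEq V] (hx : IsMinFractionalVertexCover_s17 G w x)
    {B C : Finset V} (hC : G.IsVertexCover (C : Set V)) (hB : ∀ v ∈ B, 0 < x v)
    (htight : ∀ u ∈ B \ C, ∀ v ∈ B, G.Adj u v → x u + x v ≠ 1) :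
    ∑ v ∈ B, w v ≤ ∑ v ∈ C, w v := by
  refine sum_sdiff_le_sum_sdiff.mp <| hx.sum_le_sum_of_tight_neighbors
    (fun v hv ↦ hB v (mem_sdiff.mp hv).1) fun u hu v huv huv_tight ↦ mem_sdiff.mpr ⟨?_, ?_⟩
  · exact (hC huv).resolve_left (mem_sdiff.mp hu).2
  · exact fun hv ↦ htight u hu v hv huv huv_tight

theorem sum_indepSet_le_sum_vertexCover (hx : IsMinFractionalVertexCover_s17 G w x) {J C : Finset V}
    (hJ : G.IsIndepSet (J : Set V)) (hJ_pos : ∀ v ∈ J, 0 < x v)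
    (hC : G.IsVertexCover (C : Set V)) : ∑ v ∈ J, w v ≤ ∑ v ∈ C, w v := by
  classical
  exact hx.sum_le_sum_vertexCover hC hJ_pos fun _ hu _ hv huv _ ↦
    hJ (mem_sdiff.mp hu).1 hv huv.ne huv

theorem sum_inter_union_le_sum_vertexCover [DecidableEq V]
    (hx : IsMinFractionalVertexCover_s17 G w x) {H P C : Finset V}
    (hH : ∀ v ∈ H, 1 / 2 ≤ x v) (hP : ∀ v ∈ P, 1 / 2 < x v)
    (hC : G.IsVertexCover (C : Set V)) : ∑ v ∈ H ∩ C ∪ P, w v ≤ ∑ v ∈ C, w v := by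
  have hge : ∀ v ∈ H ∩ C ∪ P, 1 / 2 ≤ x v := fun v hv ↦
    (mem_union.mp hv).elim (fun h ↦ hH v (mem_inter.mp h).1) fun h ↦ (hP v h).le
  refine hx.sum_le_sum_vertexCover hC (fun v hv ↦ one_half_pos.trans_le (hge v hv))
    fun u hu v hv _ ↦ ?_
  have huP : u ∈ P := by grind
  linarith [hP u huP, hge v hv]

end IsMinFractionalVertexCover_s17

theorem approx_indep_on_half_gives_approx_vc_general [Fintype V] [DecidableEq V]
    (hx : IsMinFractionalVertexCover_s17 G w x) {H P : Finset V} (hH : ∀ v, v ∈ H ↔ x v = 1 / 2)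
    (hP : ∀ v, v ∈ P ↔ 1 / 2 < x v) {vcG isH : 𝕜}
    (hvcG : IsLeast {r | ∃ C : Finset V, G.IsVertexCover (C : Set V) ∧ r = ∑ v ∈ C, w v} vcG)
    (hisH : IsGreatest
      {r | ∃ J : Finset V, J ⊆ H ∧ G.IsIndepSet (J : Set V) ∧ r = ∑ v ∈ J, w v} isH)
    {ε : 𝕜} (hε : 0 ≤ ε) {I : Finset V} (hIH : I ⊆ H) (hI : G.IsIndepSet (I : Set V))
    (hIw : (1 - ε) * isH ≤ ∑ v ∈ I, w v) :
    G.IsVertexCover ((H \ I ∪ P : Finset V) : Set V) ∧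
      ∑ v ∈ H \ I ∪ P, w v ≤ (1 + ε) * vcG := by
  refine ⟨hx.isVertexCover_sdiff_union (fun v ↦ (hH v).2) (fun v ↦ (hP v).2) hI, ?_⟩
  obtain ⟨⟨C, hC, rfl⟩, -⟩ := hvcG
  have hHP : Disjoint H P :=
    disjoint_left.mpr fun v hvH hvP ↦ ((hP v).1 hvP).ne' ((hH v).1 hvH)
  have hNT : ∑ v ∈ H ∩ C, w v + ∑ v ∈ P, w v ≤ ∑ v ∈ C, w v := by
    rw [← sum_union (hHP.mono_left inter_subset_left)]
    exact hx.sum_inter_union_le_sum_vertexCover (fun v hv ↦ ((hH v).1 hv).ge)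
      (fun v ↦ (hP v).1) hC
  have hHC : ∑ v ∈ H \ C, w v ≤ isH := by
    refine hisH.2 ⟨H \ C, sdiff_subset, fun u hu v hv _ huv ↦ ?_, rfl⟩
    exact (hC huv).elim (mem_sdiff.mp hu).2 (mem_sdiff.mp hv).2
  have hisC : isH ≤ ∑ v ∈ C, w v := by
    obtain ⟨⟨J, hJH, hJ, rfl⟩, -⟩ := hisH
    refine hx.sum_indepSet_le_sum_vertexCover hJ (fun v hv ↦ ?_) hC
    exact one_half_pos.trans_eq ((hH v).1 (hJH hv)).symm
  calc ∑ v ∈ H \ I ∪ P, w v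
      = ∑ v ∈ H ∩ C, w v + ∑ v ∈ H \ C, w v - ∑ v ∈ I, w v + ∑ v ∈ P, w v := by
        rw [sum_union (hHP.mono_left sdiff_subset), sum_sdiff_eq_sub hIH,
          sum_inter_add_sum_sdiff]
    _ ≤ ∑ v ∈ C, w v + isH - (1 - ε) * isH := by linarith
    _ = ∑ v ∈ C, w v + ε * isH := by ring
    _ ≤ ∑ v ∈ C, w v + ε * ∑ v ∈ C, w v := by gcongr
    _ = (1 + ε) * ∑ v ∈ C, w v := by ring

end VertexCoverLP

/-- For an optimal half-integral LP solution `x` of `G` with level sets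
`V_{1/2}, V₁`, `0 ≤ ε ≤ 1`, and an independent set `I` of `G[V_{1/2}]` with
`w(I) ≥ (1-ε)·is*(G[V_{1/2}])`, the set `(V_{1/2} \ I) ∪ V₁` is a vertex cover of `G`
of weight at most `(1+ε)·vc*(G)`. -/
theorem approx_indep_on_half_gives_approx_vc {V : Type*} [Fintype V] [DecidableEq V]
    (G : SimpleGraph V) (w : V → ℝ) (hw : ∀ v, 0 < w v)
    (x : V → ℝ)
    (hx0 : ∀ v, 0 ≤ x v)
    (hxE : ∀ u v, G.Adj u v → 1 ≤ x u + x v)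
    (hHalf : ∀ v, x v = 0 ∨ x v = 1/2 ∨ x v = 1)
    (hopt : ∀ y : V → ℝ, (∀ v, 0 ≤ y v) → (∀ u v, G.Adj u v → 1 ≤ y u + y v) →
      ∑ v, w v * x v ≤ ∑ v, w v * y v)
    (V12 V1 : Finset V)
    (hV12 : ∀ v, v ∈ V12 ↔ x v = 1/2)
    (hV1 : ∀ v, v ∈ V1 ↔ x v = 1)
    (vcG isH : ℝ)
    (hvcG : IsLeast {r : ℝ | ∃ C : Finset V,
      (∀ u v, G.Adj u v → u ∈ C ∨ v ∈ C) ∧ r = ∑ v ∈ C, w v} vcG)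
    (hisH : IsGreatest {r : ℝ | ∃ J : Finset V, J ⊆ V12 ∧
      (∀ u v, u ∈ J → v ∈ J → ¬ G.Adj u v) ∧ r = ∑ v ∈ J, w v} isH)
    (ε : ℝ) (hε0 : 0 ≤ ε) (hε1 : ε ≤ 1)
    (I : Finset V)
    (hIsub : I ⊆ V12)
    (hI : ∀ u v, u ∈ I → v ∈ I → ¬ G.Adj u v)
    (hIw : (1 - ε) * isH ≤ ∑ v ∈ I, w v) :
    (∀ u v, G.Adj u v → u ∈ (V12 \ I) ∪ V1 ∨ v ∈ (V12 \ I) ∪ V1) ∧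
    ∑ v ∈ (V12 \ I) ∪ V1, w v ≤ (1 + ε) * vcG := by
  simp only [← isIndepSet_coe_iff_forall_not_adj] at hisH hI
  exact approx_indep_on_half_gives_approx_vc_general
    ⟨⟨hx0, hxE⟩, fun y hy ↦ hopt y hy.nonneg hy.one_le_add⟩ hV12
    (fun v ↦ (hV1 v).trans (eq_one_iff_half_lt_of_halfIntegral (hHalf v)))
    hvcG hisH hε0 hIsub hI hIw
end
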